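/- Under Assumption (A), for every ε ∈ (0,t0) there exist a (D_{1,ε})-admissible measure μ_{1,ε} such that ∫ g dμ_{1,ε} ≥ ∫ g dμ for every (D_{1,ε})-admissible μ, and a (P_{1,ε})-admissible measure λ_{1,ε} such that λ_{1,ε}(Ω_ε) ≤ λ(Ω_ε) for every (P_{1,ε})-admissible λ; i.e. the optimal values d_{1,ε} := sup{∫ g dμ : μ (D_{1,ε})-admissible} and p_{1,ε} := inf{λ(Ω_ε) : λ (P_{1,ε})-admissible} are attained. -/

import Mathlib

open MeasureTheory Set Filter
open scoped ENNReal NNReal Topology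

noncomputable def rTheta (θ t x : ℝ) : ℝ := Real.exp (-θ ^ 2 / (2 * t) + θ * x / t)

noncomputable def rMu (μ : Measure ℝ) (t x : ℝ) : ℝ≥0∞ :=
  ∫⁻ θ, ENNReal.ofReal (rTheta θ t x) ∂μ

/-- `(D_{1,ε})`-admissibility: a finite nonnegative Borel measure on `[2b(0),∞)`
with `r_μ(t, b(t)) ≤ 1` for all `t ∈ Ω_ε = [ε, t0]`. -/
def D1epsAdm (b : ℝ → ℝ) (t0 ε : ℝ) (μ : Measure ℝ) : Prop :=
  IsFiniteMeasure μ ∧ μ (Set.Ici (2 * b 0))ᶜ = 0 ∧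
    ∀ t ∈ Set.Icc ε t0, rMu μ t (b t) ≤ 1

/-- `(P_{1,ε})`-admissibility: a finite nonnegative Borel measure on `Ω_ε = [ε, t0]`
with `∫ r_θ(t, b(t)) λ(dt) ≥ g(θ) = r_θ(t0, x0)` for all `θ ∈ [2b(0),∞)`. -/
def P1epsAdm (b : ℝ → ℝ) (t0 x0 ε : ℝ) (lam : Measure ℝ) : Prop :=
  IsFiniteMeasure lam ∧ lam (Set.Icc ε t0)ᶜ = 0 ∧
    ∀ θ ∈ Set.Ici (2 * b 0),
      ENNReal.ofReal (rTheta θ t0 x0) ≤ ∫⁻ t, ENNReal.ofReal (rTheta θ t (b t)) ∂lam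

/-! In the time variable `s = 1 / t - 1 / t0`, and after division by `rTheta θ t0 (b t0)`, the two
problems become the packing and covering problems for a bounded positive kernel
`exp (-θ² s / 2 + θ α s)` on a compact time interval, with objective `exp (-c θ)`, `c > 0`. Packings
are weakly compact once weighted, so a maximiser `ν` exists, and Hahn-Banach with the Riesz
representation theorem yields a covering `lam` whose mass equals the value of `ν`. Tonelli's theorem
then shows that both are optimal.

The obstacle is that undoing the division multiplies `ν` by an unbounded density: the original
problem asks for a finite measure, so `ν` must be shown to have bounded support. If the potential of
`ν` equals `1` near `s = 0` at most at `s = 0` itself, then complementary slackness gives `lam` an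
atom at `0`; the potential of `lam` exceeds `exp (-c θ)` for all large `θ`, where slackness leaves
no mass of `ν`. Otherwise the potential of `ν` equals `1` at times accumulating at `0`. Then `ν` has
all moments, and the potential, extended to complex times, is flat at `0` relative to `1`; a
Phragmén-Lindelöf argument upgrades this to equality with `1` at all times. By slackness `ν` has no
mass just above `θ₀ = 2 b(0)`, so the contribution of `θ > θ₀` is negligible to all orders as
`s → ∞`; by analyticity in `1 / s` it vanishes, and `ν` is concentrated at `θ₀`.
-/

/-! ### Moments from frequent contact -/

/-- The `k`-th Taylor remainder of `f` at `0`, normalised so that it is a value of the `k`-th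
derivative of `f` between `0` and `s`. -/
noncomputable def taylorQuot (f : ℝ → ℝ) (k : ℕ) (s : ℝ) : ℝ :=
  (f s - ∑ j ∈ Finset.range k, iteratedDeriv j f 0 / j.factorial * s ^ j) * (k.factorial / s ^ k)

lemma exists_taylorQuot_eq {f : ℝ → ℝ} {δ s : ℝ} {k : ℕ} (hf : ContDiffOn ℝ k f (Ioo (-δ) δ))
    (hs : s ∈ Ioo 0 δ) : ∃ ξ ∈ Ioc 0 s, taylorQuot f k s = iteratedDeriv k f ξ := by
  have hsub : Icc 0 s ⊆ Ioo (-δ) δ := Icc_subset_Ioo (by linarith [hs.1, hs.2]) hs.2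
  obtain _ | n := k
  · exact ⟨s, ⟨hs.1, le_rfl⟩, by simp [taylorQuot]⟩
  obtain ⟨ξ, hξ, h⟩ := taylor_mean_remainder_lagrange_iteratedDeriv (n := n) hs.1.ne
    (hf.mono (by rwa [uIcc_of_le hs.1.le]))
  rw [uIcc_of_le hs.1.le, taylor_within_apply, sub_zero] at h
  have hderiv : ∀ j ∈ Finset.range (n + 1),
      iteratedDerivWithin j f (Icc 0 s) 0 = iteratedDeriv j f 0 := fun j hj =>
    iteratedDerivWithin_eq_iteratedDeriv (uniqueDiffOn_Icc hs.1)
      ((hf.contDiffAt (Ioo_mem_nhds (by linarith [hs.1, hs.2]) (hs.1.trans hs.2))).of_le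
        (by exact_mod_cast (Finset.mem_range.1 hj).le)) ⟨le_rfl, hs.1.le⟩
  rw [uIoo_of_lt hs.1] at hξ
  refine ⟨ξ, Ioo_subset_Ioc_self hξ, ?_⟩
  have hsum : ∑ j ∈ Finset.range (n + 1), iteratedDeriv j f 0 / j.factorial * s ^ j
      = ∑ j ∈ Finset.range (n + 1),
        ((j.factorial : ℝ)⁻¹ * s ^ j) • iteratedDerivWithin j f (Icc 0 s) 0 :=
    Finset.sum_congr rfl fun j hj => by rw [hderiv j hj, smul_eq_mul]; ring
  have hs0 : s ≠ 0 := hs.1.ne'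
  rw [taylorQuot, hsum, h]
  field_simp

lemma tendsto_taylorQuot {f : ℝ → ℝ} {δ : ℝ} (hδ : 0 < δ) {k : ℕ}
    (hf : ContDiffOn ℝ k f (Ioo (-δ) δ)) :
    Tendsto (taylorQuot f k) (𝓝[>] 0) (𝓝 (iteratedDeriv k f 0)) := by
  have hcont : ContinuousAt (iteratedDeriv k f) 0 :=
    ((hf.continuousOn_iteratedDerivWithin le_rfl isOpen_Ioo.uniqueDiffOn).congr
      (fun x hx => (iteratedDerivWithin_of_isOpen isOpen_Ioo hx).symm)).continuousAt
      (Ioo_mem_nhds (neg_lt_zero.2 hδ) hδ)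
  rw [Metric.tendsto_nhdsWithin_nhds]
  intro e he
  obtain ⟨η, hη, h⟩ := Metric.continuousAt_iff.1 hcont e he
  refine ⟨min η δ, lt_min hη hδ, fun s hs0 hs => ?_⟩
  rw [Real.dist_0_eq_abs, abs_of_pos hs0, lt_min_iff] at hs
  obtain ⟨ξ, hξ, heq⟩ := exists_taylorQuot_eq hf ⟨hs0, hs.2⟩
  rw [heq]
  apply h
  rw [Real.dist_0_eq_abs, abs_of_pos hξ.1]
  exact hξ.2.trans_lt hs.1

section Moments

variable {Θ : Type*} [MeasurableSpace Θ] {ν : Measure Θ} {φ : Θ → ℝ → ℝ}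

lemma integral_eq_of_tendsto_of_le_limit [IsFiniteMeasure ν] {X : ℕ → Θ → ℝ} {Y : Θ → ℝ}
    {m c C M : ℝ} (hint : ∀ n, Integrable (X n) ν)
    (hlim : ∀ᵐ θ ∂ν, Tendsto (X · θ) atTop (𝓝 (Y θ))) (hlow : ∀ n, ∀ᵐ θ ∂ν, m ≤ X n θ)
    (hdom : ∀ n, ∀ᵐ θ ∂ν, |X n θ| ≤ C * |Y θ| + M) (hX : ∀ n, ∫ θ, X n θ ∂ν = c) :
    Integrable Y ν ∧ ∫ θ, Y θ ∂ν = c := by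
  have hmass (n : ℕ) : ∫⁻ θ, ‖X n θ - m‖ₑ ∂ν = ENNReal.ofReal (c - ν.real univ • m) := by
    have hsub : Integrable (fun θ => X n θ - m) ν := (hint n).sub (integrable_const m)
    rw [← integral_const, ← hX n, ← integral_sub (hint n) (integrable_const m),
      ofReal_integral_eq_lintegral_ofReal hsub]
    · refine lintegral_congr_ae ((hlow n).mono fun θ hθ => ?_)
      exact (Real.enorm_eq_ofReal (sub_nonneg.2 hθ))
    · exact (hlow n).mono fun θ hθ => sub_nonneg.2 hθ
  have hmeas (n : ℕ) : AEStronglyMeasurable (fun θ => X n θ - m) ν :=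
    (hint n).1.sub aestronglyMeasurable_const
  have hlim_sub : ∀ᵐ θ ∂ν, Tendsto (X · θ - m) atTop (𝓝 (Y θ - m)) :=
    hlim.mono fun θ hθ => hθ.sub_const m
  have hfatou : ∫⁻ θ, ‖Y θ - m‖ₑ ∂ν < ∞ := by
    calc ∫⁻ θ, ‖Y θ - m‖ₑ ∂ν = ∫⁻ θ, liminf (fun n => ‖X n θ - m‖ₑ) atTop ∂ν :=
          lintegral_congr_ae (hlim_sub.mono fun θ hθ => hθ.enorm.liminf_eq.symm)
      _ ≤ liminf (fun n => ∫⁻ θ, ‖X n θ - m‖ₑ ∂ν) atTop :=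
          lintegral_liminf_le' fun n => (hmeas n).enorm
      _ < ∞ := by simp only [hmass, liminf_const, ENNReal.ofReal_lt_top]
  have hYm : Integrable (fun θ => Y θ - m) ν :=
    ⟨aestronglyMeasurable_of_tendsto_ae _ hmeas hlim_sub, hfatou⟩
  have hY : Integrable Y ν := by
    simpa [Pi.add_def] using hYm.add (integrable_const m)
  refine ⟨hY, tendsto_nhds_unique (tendsto_integral_of_dominated_convergence _
    (fun n => (hint n).1) ((hY.abs.const_mul C).add (integrable_const M)) hdom hlim) ?_⟩
  simp only [hX, tendsto_const_nhds]

/-- The family `φ` of functions of `s`, indexed by `θ`, has `k`-th derivatives near `0⁺` that are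
sign-definite up to a bounded error and controlled by their value at `0`, for `ν`-almost all `θ`. -/
def AlmostAlternating (ν : Measure Θ) (φ : Θ → ℝ → ℝ) (k : ℕ) : Prop :=
  ∃ m C M : ℝ, ∀ᶠ s in 𝓝[>] (0 : ℝ), ∀ᵐ θ ∂ν, ∀ ξ ∈ Ioc 0 s,
    m ≤ (-1) ^ k * iteratedDeriv k (φ θ) ξ ∧
      |iteratedDeriv k (φ θ) ξ| ≤ C * |iteratedDeriv k (φ θ) 0| + M

lemma integral_taylorQuot_eq {k : ℕ} {s : ℝ} (hint : Integrable (φ · s) ν)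
    (hs : ∫ θ, φ θ s ∂ν = 1)
    (hderiv : ∀ j < k, Integrable (fun θ => iteratedDeriv j (φ θ) 0) ν ∧
      ∫ θ, iteratedDeriv j (φ θ) 0 ∂ν = if j = 0 then 1 else 0) :
    Integrable (fun θ => taylorQuot (φ θ) k s) ν ∧
      ∫ θ, taylorQuot (φ θ) k s ∂ν = if k = 0 then 1 else 0 := by
  have hterm (j : ℕ) (hj : j ∈ Finset.range k) :
      Integrable (fun θ => iteratedDeriv j (φ θ) 0 / j.factorial * s ^ j) ν :=
    ((hderiv j (Finset.mem_range.1 hj)).1.div_const _).mul_const _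
  have hcoef : ∀ j ∈ Finset.range k,
      ∫ θ, iteratedDeriv j (φ θ) 0 / j.factorial * s ^ j ∂ν = if j = 0 then 1 else 0 := by
    intro j hj
    rw [integral_mul_const, integral_div, (hderiv j (Finset.mem_range.1 hj)).2]
    split_ifs with h <;> simp [h]
  refine ⟨(hint.sub (integrable_finsetSum _ hterm)).mul_const _, ?_⟩
  simp only [taylorQuot]
  rw [integral_mul_const, integral_sub hint (integrable_finsetSum _ hterm),
    integral_finsetSum _ hterm, hs, Finset.sum_congr rfl hcoef,
    Finset.sum_ite_eq' (Finset.range k) 0]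
  rcases eq_or_ne k 0 with rfl | hk <;> simp [*, Nat.pos_iff_ne_zero]

lemma integral_iteratedDeriv_zero_eq [IsFiniteMeasure ν] {δ : ℝ} (hδ : 0 < δ)
    (hsmooth : ∀ θ, ∀ k : ℕ, ContDiffOn ℝ k (φ θ) (Ioo (-δ) δ))
    (halt : ∀ k, AlmostAlternating ν φ k)
    (hint : ∀ᶠ s in 𝓝[>] (0 : ℝ), Integrable (φ · s) ν)
    (hfreq : ∃ᶠ s in 𝓝[>] (0 : ℝ), ∫ θ, φ θ s ∂ν = 1) (k : ℕ) :
    Integrable (fun θ => iteratedDeriv k (φ θ) 0) ν ∧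
      ∫ θ, iteratedDeriv k (φ θ) 0 ∂ν = if k = 0 then 1 else 0 := by
  induction k using Nat.strong_induction_on with
  | _ k ih =>
  obtain ⟨m, C, M, hmCM⟩ := halt k
  obtain ⟨s, hs0, hs⟩ := exists_seq_forall_of_frequently (hfreq.and_eventually
    ((hmCM.and hint).and (Ioo_mem_nhdsGT hδ)))
  have hquot (n : ℕ) := integral_taylorQuot_eq (hs n).2.1.2 (hs n).1 ih
  have hbound (n : ℕ) : ∀ᵐ θ ∂ν, m ≤ (-1) ^ k * taylorQuot (φ θ) k (s n) ∧
      |taylorQuot (φ θ) k (s n)| ≤ C * |iteratedDeriv k (φ θ) 0| + M := by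
    filter_upwards [(hs n).2.1.1] with θ hθ
    obtain ⟨ξ, hξ, h⟩ := exists_taylorQuot_eq (hsmooth θ k) (hs n).2.2
    rw [h]
    exact hθ ξ hξ
  have habs (x : ℝ) : |(-1) ^ k * x| = |x| := by simp [abs_mul]
  obtain ⟨hY, hYint⟩ := integral_eq_of_tendsto_of_le_limit
    (X := fun n θ => (-1) ^ k * taylorQuot (φ θ) k (s n))
    (Y := fun θ => (-1) ^ k * iteratedDeriv k (φ θ) 0)
    (c := (-1) ^ k * if k = 0 then 1 else 0) (fun n => (hquot n).1.const_mul _)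
    (ae_of_all _ fun θ => (((tendsto_taylorQuot hδ (hsmooth θ k)).comp hs0).const_mul _))
    (fun n => (hbound n).mono fun θ hθ => hθ.1)
    (fun n => (hbound n).mono fun θ hθ => by simpa only [habs] using hθ.2)
    (fun n => by rw [integral_const_mul, (hquot n).2])
  rw [integrable_const_mul_iff (isUnit_iff_ne_zero.2 (by simp))] at hY
  rw [integral_const_mul] at hYint
  exact ⟨hY, mul_left_cancel₀ (by simp) hYint⟩

end Moments

lemma integrable_exp_mul_of_moment_div_factorial_le {ν : Measure ℝ} {y : ℝ} {a : ℕ → ℝ}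
    (ha : Summable a) (hint : ∀ k : ℕ, Integrable (fun θ => (y * θ) ^ (2 * k)) ν)
    (hmom : ∀ k : ℕ, ∫ θ, (y * θ) ^ (2 * k) / (2 * k).factorial ∂ν ≤ a k) :
    Integrable (fun θ => Real.exp (y * θ)) ν := by
  have hnonneg (k : ℕ) (θ : ℝ) : 0 ≤ (y * θ) ^ (2 * k) / (2 * k).factorial :=
    div_nonneg ((even_two_mul k).pow_nonneg _) (Nat.cast_nonneg _)
  have hcosh : ∫⁻ θ, ENNReal.ofReal (Real.cosh (y * θ)) ∂ν < ∞ := by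
    calc ∫⁻ θ, ENNReal.ofReal (Real.cosh (y * θ)) ∂ν
        = ∫⁻ θ, ∑' k : ℕ, ENNReal.ofReal ((y * θ) ^ (2 * k) / (2 * k).factorial) ∂ν := by
          refine lintegral_congr fun θ => ?_
          rw [← ENNReal.ofReal_tsum_of_nonneg (hnonneg · θ) (Real.hasSum_cosh _).summable,
            ← Real.cosh_eq_tsum]
      _ = ∑' k : ℕ, ENNReal.ofReal (∫ θ, (y * θ) ^ (2 * k) / (2 * k).factorial ∂ν) := by
          rw [lintegral_tsum fun k => by fun_prop]
          simp only [ofReal_integral_eq_lintegral_ofReal ((hint _).div_const _)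
            (ae_of_all _ (hnonneg _))]
      _ ≤ ∑' k : ℕ, ENNReal.ofReal (a k) :=
          ENNReal.tsum_le_tsum fun k => ENNReal.ofReal_le_ofReal (hmom k)
      _ < ∞ := ha.tsum_ofReal_lt_top
  have hint_cosh : Integrable (fun θ => Real.cosh (y * θ)) ν :=
    ⟨by fun_prop, by rwa [hasFiniteIntegral_iff_ofReal (ae_of_all _ fun _ => (Real.cosh_pos _).le)]⟩
  refine (hint_cosh.const_mul 2).mono' (by fun_prop) (ae_of_all _ fun θ => ?_)
  rw [Real.norm_of_nonneg (Real.exp_pos _).le, Real.cosh_eq]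
  linarith [Real.exp_pos (-(y * θ))]

lemma exists_integrable_exp_of_moment_le {ν : Measure ℝ} {E : ℝ} (hE : 0 ≤ E)
    (hint : ∀ k : ℕ, Integrable (fun θ => θ ^ (2 * k)) ν)
    (hmom : ∀ k : ℕ, ∫ θ, θ ^ (2 * k) ∂ν ≤ E ^ (k + 1) * ((k : ℝ) + 1) ^ (2 * k)) :
    ∃ y > 0, Integrable (fun θ => Real.exp (y * θ)) ν := by
  obtain ⟨y, hy, hyE⟩ : ∃ y > 0, y ^ 2 * (E * Real.exp 1) ≤ 1 / 2 := by
    have hEe : 0 ≤ E * Real.exp 1 := by positivity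
    refine ⟨1 / (1 + 2 * (E * Real.exp 1)), by positivity, ?_⟩
    rw [div_pow, one_pow, one_div_mul_eq_div, div_le_div_iff₀ (by positivity) two_pos]
    nlinarith
  have hpow (k : ℕ) (θ : ℝ) : (y * θ) ^ (2 * k) = y ^ (2 * k) * θ ^ (2 * k) := mul_pow _ _ _
  refine ⟨y, hy, integrable_exp_mul_of_moment_div_factorial_le
    (a := fun k => E * Real.exp 1 * (1 / 2) ^ k) (summable_geometric_two.mul_left _)
    (fun k => ?_) fun k => ?_⟩
  · simp only [hpow]
    exact (hint k).const_mul _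
  · simp only [hpow, integral_div, integral_const_mul]
    have hfac := Real.pow_div_factorial_le_exp (x := (k : ℝ) + 1) (by positivity) (2 * k)
    calc y ^ (2 * k) * (∫ θ, θ ^ (2 * k) ∂ν) / (2 * k).factorial
        ≤ y ^ (2 * k) * (E ^ (k + 1) * ((k : ℝ) + 1) ^ (2 * k)) / (2 * k).factorial := by
          gcongr
          exact hmom k
      _ = y ^ (2 * k) * E ^ (k + 1) * (((k : ℝ) + 1) ^ (2 * k) / (2 * k).factorial) := by ring
      _ ≤ y ^ (2 * k) * E ^ (k + 1) * Real.exp ((k : ℝ) + 1) := by gcongr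
      _ = E * Real.exp 1 * (y ^ 2 * (E * Real.exp 1)) ^ k := by
          rw [← Nat.cast_succ, ← Real.exp_one_pow, Nat.succ_eq_add_one]; ring
      _ ≤ E * Real.exp 1 * (1 / 2) ^ k := by gcongr

/-! ### The kernel in complex time -/

/-- The kernel `exp (-θ² w / 2 + θ B w)` with drift `B`, in complex time `w`. -/
noncomputable def complexKernel (B : ℂ → ℂ) (θ : ℝ) (w : ℂ) : ℂ :=
  Complex.exp (-((θ : ℂ) ^ 2 / 2) * w + θ * B w)

/-- `B` is a holomorphic drift on the disc of radius `ρ` about `0`: real on the real axis, zero at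
`0`, and Lipschitz with constant `A`. -/
structure IsHolomorphicDrift (B : ℂ → ℂ) (ρ A : ℝ) : Prop where
  radius_pos : 0 < ρ
  differentiableOn : DifferentiableOn ℂ B (Metric.ball 0 ρ)
  map_zero : B 0 = 0
  norm_sub_le : ∀ w ∈ Metric.ball (0 : ℂ) ρ, ∀ z ∈ Metric.ball (0 : ℂ) ρ, ‖B w - B z‖ ≤ A * ‖w - z‖
  im_ofReal : ∀ s : ℝ, |s| < ρ → (B s).im = 0

lemma choose_mul_factorial_le_pow (i m : ℕ) :
    (i + m).choose i * m.factorial ≤ (i + m) ^ m := by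
  rw [Nat.choose_symm_add, mul_comm, ← Nat.descFactorial_eq_factorial_mul_choose]
  exact Nat.descFactorial_le_pow (i + m) m

lemma sum_pow_sub_le {q : ℝ} (hq0 : 0 ≤ q) (hq : q ≤ 1 / 2) (k : ℕ) :
    ∑ i ∈ Finset.range k, q ^ (k - i) ≤ 2 * q := by
  rw [← Finset.sum_range_reflect]
  calc ∑ i ∈ Finset.range k, q ^ (k - (k - 1 - i))
      = ∑ i ∈ Finset.range k, q ^ (i + 1) := Finset.sum_congr rfl fun i hi => by
        rw [show k - (k - 1 - i) = i + 1 by have := Finset.mem_range.1 hi; omega]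
    _ ≤ ∑ i ∈ Finset.range k, (1 / 2) ^ i * q := Finset.sum_le_sum fun i _ => by
        rw [pow_succ]; gcongr
    _ ≤ 2 * q := by
        rw [← Finset.sum_mul]
        gcongr
        exact (summable_geometric_two.sum_le_tsum _ fun _ _ => by positivity).trans_eq
          tsum_geometric_two

lemma norm_iteratedDeriv_cexp_mul_sub_le {f : ℂ → ℂ} {z a : ℂ} {k : ℕ} {C R q : ℝ}
    (hf : ContDiffAt ℂ k f z) (hC : 0 ≤ C) (hR : 0 ≤ R)
    (hCauchy : ∀ m, ‖iteratedDeriv m f z‖ ≤ m.factorial * C * R ^ m)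
    (hq0 : 0 ≤ q) (hq : q ≤ 1 / 2) (hkR : k * R ≤ q * ‖a‖) :
    ‖iteratedDeriv k (fun w => Complex.exp (a * w) * f w) z - a ^ k * Complex.exp (a * z) * f z‖
      ≤ 2 * q * C * ‖Complex.exp (a * z)‖ * ‖a‖ ^ k := by
  have hLeibniz : iteratedDeriv k (fun w => Complex.exp (a * w) * f w) z
      - a ^ k * Complex.exp (a * z) * f z = ∑ i ∈ Finset.range k,
        k.choose i * (a ^ i * Complex.exp (a * z)) * iteratedDeriv (k - i) f z := by
    have h := iteratedDeriv_mul (f := fun w => Complex.exp (a * w)) (g := f) (x := z) (n := k)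
      (by fun_prop) hf
    simp only [Pi.mul_def] at h
    rw [h, Finset.sum_range_succ]
    simp [iteratedDeriv_cexp_const_mul]
  have hterm : ∀ i ∈ Finset.range k,
      ‖k.choose i * (a ^ i * Complex.exp (a * z)) * iteratedDeriv (k - i) f z‖
        ≤ C * ‖Complex.exp (a * z)‖ * ‖a‖ ^ k * q ^ (k - i) := by
    intro i hi
    obtain ⟨m, rfl⟩ := Nat.exists_eq_add_of_le (Finset.mem_range.1 hi).le
    have hchoose : ((i + m).choose i : ℝ) * m.factorial ≤ ((i + m : ℕ) : ℝ) ^ m := by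
      exact_mod_cast choose_mul_factorial_le_pow i m
    rw [norm_mul, norm_mul, norm_mul, norm_pow, Complex.norm_natCast, Nat.add_sub_cancel_left]
    calc ((i + m).choose i : ℝ) * (‖a‖ ^ i * ‖Complex.exp (a * z)‖) * ‖iteratedDeriv m f z‖
        ≤ ((i + m).choose i : ℝ) * (‖a‖ ^ i * ‖Complex.exp (a * z)‖)
            * (m.factorial * C * R ^ m) := by gcongr; exact hCauchy m
      _ = ((i + m).choose i * m.factorial : ℝ) * R ^ m
            * (C * ‖Complex.exp (a * z)‖ * ‖a‖ ^ i) := by ring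
      _ ≤ ((i + m : ℕ) : ℝ) ^ m * R ^ m * (C * ‖Complex.exp (a * z)‖ * ‖a‖ ^ i) := by gcongr
      _ = (((i + m : ℕ) : ℝ) * R) ^ m * (C * ‖Complex.exp (a * z)‖ * ‖a‖ ^ i) := by rw [mul_pow]
      _ ≤ (q * ‖a‖) ^ m * (C * ‖Complex.exp (a * z)‖ * ‖a‖ ^ i) := by gcongr
      _ = C * ‖Complex.exp (a * z)‖ * ‖a‖ ^ (i + m) * q ^ m := by ring
  rw [hLeibniz]
  calc ‖∑ i ∈ Finset.range k,
          k.choose i * (a ^ i * Complex.exp (a * z)) * iteratedDeriv (k - i) f z‖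
      ≤ ∑ i ∈ Finset.range k, C * ‖Complex.exp (a * z)‖ * ‖a‖ ^ k * q ^ (k - i) :=
        (norm_sum_le _ _).trans (Finset.sum_le_sum hterm)
    _ ≤ C * ‖Complex.exp (a * z)‖ * ‖a‖ ^ k * (2 * q) := by
        rw [← Finset.mul_sum]
        gcongr
        exact sum_pow_sub_le hq0 hq k
    _ = 2 * q * C * ‖Complex.exp (a * z)‖ * ‖a‖ ^ k := by ring

lemma iteratedDeriv_clm_comp_ofReal_mul {E : Type*} [NormedAddCommGroup E] [NormedSpace ℝ E]
    (L : ℂ →L[ℝ] E) {f : ℂ → ℂ} {U : Set ℂ} (hU : IsOpen U) (hf : DifferentiableOn ℂ f U) (w : ℂ)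
    (k : ℕ) {x : ℝ} (hx : x * w ∈ U) :
    iteratedDeriv k (fun s : ℝ => L (f (s * w))) x = L (w ^ k * iteratedDeriv k f (x * w)) := by
  induction k generalizing x with
  | zero => simp
  | succ k ih =>
    have hcont : Continuous fun s : ℝ => (s : ℂ) * w := by fun_prop
    have hnear : iteratedDeriv k (fun s : ℝ => L (f (s * w))) =ᶠ[𝓝 x]
        fun s : ℝ => L (w ^ k * iteratedDeriv k f (s * w)) :=
      (hcont.continuousAt.eventually (hU.mem_nhds hx)).mono fun s hs => ih hs
    have hdiff : DifferentiableAt ℂ (iteratedDeriv k f) (x * w) := by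
      rw [iteratedDeriv_eq_iterate]
      exact ((hf.analyticAt (hU.mem_nhds hx)).iterated_deriv k).differentiableAt
    have hline : HasDerivAt (fun s : ℝ => (s : ℂ) * w) w x := by
      simpa using (Complex.ofRealCLM.hasDerivAt (x := x)).mul_const w
    rw [iteratedDeriv_succ, iteratedDeriv_succ, hnear.deriv_eq, pow_succ, mul_assoc, mul_comm w]
    exact (L.hasFDerivAt.comp_hasDerivAt x
      ((hdiff.hasDerivAt.comp x hline).const_mul (w ^ k))).deriv

lemma norm_complexKernel (B : ℂ → ℂ) (θ : ℝ) (w : ℂ) :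
    ‖complexKernel B θ w‖ = Real.exp (-(θ ^ 2 / 2) * w.re + θ * (B w).re) := by
  have hcast : -((θ : ℂ) ^ 2 / 2) = ((-(θ ^ 2 / 2) : ℝ) : ℂ) := by push_cast; rfl
  rw [complexKernel, Complex.norm_exp, Complex.add_re, hcast, Complex.re_ofReal_mul,
    Complex.re_ofReal_mul]

lemma ofReal_mem_ball {ρ s : ℝ} (hs : |s| < ρ) : (s : ℂ) ∈ Metric.ball (0 : ℂ) ρ := by
  simpa using hs

namespace IsHolomorphicDrift

variable {B : ℂ → ℂ} {ρ A θ : ℝ}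

lemma lipschitz_nonneg (h : IsHolomorphicDrift B ρ A) : 0 ≤ A := by
  have hw : ((ρ / 2 : ℝ) : ℂ) ∈ Metric.ball (0 : ℂ) ρ :=
    ofReal_mem_ball (by rw [abs_of_pos (half_pos h.radius_pos)]; exact half_lt_self h.radius_pos)
  have hle := h.norm_sub_le _ hw 0 (Metric.mem_ball_self h.radius_pos)
  have hpos : 0 < ‖((ρ / 2 : ℝ) : ℂ) - 0‖ := by
    simpa using h.radius_pos.ne'
  exact nonneg_of_mul_nonneg_left ((norm_nonneg _).trans hle) hpos

lemma norm_apply_le (h : IsHolomorphicDrift B ρ A) {w : ℂ} (hw : ‖w‖ < ρ) : ‖B w‖ ≤ A * ‖w‖ := by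
  simpa [h.map_zero] using h.norm_sub_le w (by simpa using hw) 0 (Metric.mem_ball_self h.radius_pos)

lemma differentiableOn_complexKernel (h : IsHolomorphicDrift B ρ A) (θ : ℝ) :
    DifferentiableOn ℂ (complexKernel B θ) (Metric.ball 0 ρ) := by
  have := h.differentiableOn
  unfold complexKernel
  fun_prop

lemma norm_complexKernel_le (h : IsHolomorphicDrift B ρ A) (hθ : 0 ≤ θ) {w : ℂ} (hw : ‖w‖ < ρ) :
    ‖complexKernel B θ w‖ ≤ Real.exp (-(θ ^ 2 / 2) * w.re + θ * (A * ‖w‖)) := by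
  rw [norm_complexKernel]
  have := (Complex.re_le_norm _).trans (h.norm_apply_le hw)
  gcongr

lemma complexKernel_ofReal (h : IsHolomorphicDrift B ρ A) (θ : ℝ) {s : ℝ} (hs : |s| < ρ) :
    complexKernel B θ s = ‖complexKernel B θ s‖ := by
  have hB : B s = (B s).re := Complex.ext rfl (by simp [h.im_ofReal s hs])
  rw [norm_complexKernel, complexKernel, hB]
  push_cast
  simp

lemma norm_iteratedDeriv_complexKernel_le (h : IsHolomorphicDrift B ρ A) (hθ : 0 ≤ θ) {w : ℂ}
    {r : ℝ} (hr : 0 < r) (hwr : ‖w‖ + r < ρ) (k : ℕ) :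
    ‖iteratedDeriv k (complexKernel B θ) w‖
      ≤ k.factorial * Real.exp (-(θ ^ 2 / 2) * (w.re - r) + θ * (A * (‖w‖ + r))) / r ^ k := by
  have hnorm : ∀ z ∈ Metric.closedBall w r, ‖z‖ ≤ ‖w‖ + r := fun z hz => by
    have := norm_le_norm_add_norm_sub' z w
    rw [mem_closedBall_iff_norm] at hz
    linarith
  refine Complex.norm_iteratedDeriv_le_of_forall_mem_sphere_norm_le k hr
    (DifferentiableOn.diffContOnCl ?_) fun z hz => ?_
  · rw [closure_ball _ hr.ne']
    exact (h.differentiableOn_complexKernel θ).mono fun z hz => by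
      simpa using (hnorm z hz).trans_lt hwr
  · have hz' := hnorm z (Metric.sphere_subset_closedBall hz)
    refine (h.norm_complexKernel_le hθ (hz'.trans_lt hwr)).trans (Real.exp_le_exp.2 ?_)
    have hre : w.re - r ≤ z.re := by
      have := (Complex.abs_re_le_norm (z - w)).trans_eq (mem_sphere_iff_norm.1 hz)
      rw [Complex.sub_re] at this
      linarith [neg_le_of_abs_le this]
    have hA := h.lipschitz_nonneg
    have hdrift : A * ‖z‖ ≤ A * (‖w‖ + r) := by gcongr
    nlinarith [mul_le_mul_of_nonneg_left hdrift hθ, mul_le_mul_of_nonneg_left hre (sq_nonneg θ)]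

lemma norm_iteratedDeriv_cexp_drift_le (h : IsHolomorphicDrift B ρ A) (hθ : 0 < θ) {w : ℂ}
    (hw : ‖w‖ + 1 / θ < ρ) (m : ℕ) :
    ‖iteratedDeriv m (fun z => Complex.exp (θ * B z)) w‖
      ≤ m.factorial * (‖Complex.exp (θ * B w)‖ * Real.exp A) * θ ^ m := by
  have hmem : ∀ z ∈ Metric.closedBall w (1 / θ), z ∈ Metric.ball (0 : ℂ) ρ := fun z hz => by
    have := norm_le_norm_add_norm_sub' z w
    rw [mem_closedBall_iff_norm] at hz
    rw [mem_ball_zero_iff]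
    linarith
  have hCauchy := Complex.norm_iteratedDeriv_le_of_forall_mem_sphere_norm_le (c := w) (R := 1 / θ)
    (C := ‖Complex.exp (θ * B w)‖ * Real.exp A) (f := fun z => Complex.exp (θ * B z)) m
    (by positivity) (DifferentiableOn.diffContOnCl ?_) fun z hz => ?_
  · rwa [one_div, inv_pow, div_inv_eq_mul] at hCauchy
  · rw [closure_ball _ (by positivity)]
    have := h.differentiableOn.mono hmem
    fun_prop
  · have hdist := h.norm_sub_le z (hmem z (Metric.sphere_subset_closedBall hz)) w
      (hmem w (Metric.mem_closedBall_self (by positivity)))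
    rw [mem_sphere_iff_norm.1 hz] at hdist
    rw [Complex.norm_exp, Complex.norm_exp, ← Real.exp_add, Complex.re_ofReal_mul,
      Complex.re_ofReal_mul, Real.exp_le_exp]
    have hre : (B z).re ≤ (B w).re + A * (1 / θ) := by
      have := (Complex.re_le_norm _).trans hdist
      rw [Complex.sub_re] at this
      linarith
    calc θ * (B z).re ≤ θ * ((B w).re + A * (1 / θ)) := by gcongr
      _ = θ * (B w).re + A := by field_simp

lemma norm_iteratedDeriv_sub_le (h : IsHolomorphicDrift B ρ A) {D : ℝ} (hDA : 8 * Real.exp A ≤ D)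
    (hDρ : 4 ≤ D * ρ) {k : ℕ} (hθ : D * (k + 1) ≤ θ) {w : ℂ} (hw : ‖w‖ ≤ ρ / 2) :
    ‖iteratedDeriv k (complexKernel B θ) w - (-((θ : ℂ) ^ 2 / 2)) ^ k * complexKernel B θ w‖
      ≤ ‖complexKernel B θ w‖ * (θ ^ 2 / 2) ^ k / 2 := by
  have hρ := h.radius_pos
  have hA := Real.one_le_exp h.lipschitz_nonneg
  have hDpos : 0 < D := by linarith
  have hDθ : D ≤ θ := le_trans (by nlinarith [Nat.cast_nonneg (α := ℝ) k]) hθ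
  have hθpos : 0 < θ := hDpos.trans_le hDθ
  have hnorm : ‖-((θ : ℂ) ^ 2 / 2)‖ = θ ^ 2 / 2 := by simp
  have hradius : ‖w‖ + 1 / θ < ρ := by
    have : 1 / θ < ρ / 2 := by
      rw [div_lt_iff₀ hθpos]
      nlinarith
    linarith
  have hdiff : DifferentiableOn ℂ (fun z => Complex.exp (θ * B z)) (Metric.ball 0 ρ) := by
    have := h.differentiableOn
    fun_prop
  have hmem : w ∈ Metric.ball (0 : ℂ) ρ := by simpa using hw.trans_lt (half_lt_self hρ)
  have hmain := norm_iteratedDeriv_cexp_mul_sub_le (a := -((θ : ℂ) ^ 2 / 2)) (q := 2 / D) (k := k)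
    (hdiff.analyticAt (Metric.isOpen_ball.mem_nhds hmem)).contDiffAt
    (by positivity) hθpos.le (h.norm_iteratedDeriv_cexp_drift_le hθpos hradius) (by positivity)
    (by rw [div_le_div_iff₀ hDpos two_pos]; linarith) (by
      rw [hnorm, div_mul_eq_mul_div, le_div_iff₀ hDpos]
      nlinarith [mul_le_mul_of_nonneg_right hθ hθpos.le])
  have hfac : complexKernel B θ
      = fun z => Complex.exp (-((θ : ℂ) ^ 2 / 2) * z) * Complex.exp (θ * B z) := by
    funext z
    rw [complexKernel, Complex.exp_add]
  have hconst : 2 * (2 / D) * Real.exp A ≤ 1 / 2 := by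
    rw [← mul_div_assoc, div_mul_eq_mul_div, div_le_div_iff₀ hDpos two_pos]
    linarith
  rw [hnorm] at hmain
  rw [hfac, ← mul_assoc, norm_mul]
  calc _ ≤ _ := hmain
    _ = 2 * (2 / D) * Real.exp A * (‖Complex.exp (-((θ : ℂ) ^ 2 / 2) * w)‖
          * ‖Complex.exp (θ * B w)‖ * (θ ^ 2 / 2) ^ k) := by ring
    _ ≤ 1 / 2 * (‖Complex.exp (-((θ : ℂ) ^ 2 / 2) * w)‖
          * ‖Complex.exp (θ * B w)‖ * (θ ^ 2 / 2) ^ k) := by gcongr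
    _ = _ := by ring

end IsHolomorphicDrift

lemma factorial_le_succ_pow (k : ℕ) : (k.factorial : ℝ) ≤ ((k : ℝ) + 1) ^ k := by
  exact_mod_cast k.factorial_le_pow.trans (Nat.pow_le_pow_left k.le_succ k)

/-- The restriction of `complexKernel` to real times, where it is real for a holomorphic drift. -/
noncomputable def realKernel (B : ℂ → ℂ) (θ s : ℝ) : ℝ := (complexKernel B θ s).re

namespace IsHolomorphicDrift

variable {B : ℂ → ℂ} {ρ A θ : ℝ}

lemma exists_norm_iteratedDeriv_le_pow (h : IsHolomorphicDrift B ρ A) {D : ℝ} (hD : 0 ≤ D) :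
    ∃ E ≥ 0, ∀ (k : ℕ) (θ : ℝ), 0 ≤ θ → θ ≤ D * (k + 1) → ∀ w : ℂ, ‖w‖ ≤ ρ / 4 / (k + 1) →
      ‖iteratedDeriv k (complexKernel B θ) w‖ ≤ E ^ (k + 1) * ((k : ℝ) + 1) ^ (2 * k) := by
  have hρ := h.radius_pos
  have hA := h.lipschitz_nonneg
  refine ⟨Real.exp (ρ / 2 * (D ^ 2 / 2 + A * D)) * (1 + 4 / ρ), by positivity,
    fun k θ hθ0 hθ w hw => ?_⟩
  have hk1 : (1 : ℝ) ≤ k + 1 := by linarith [Nat.cast_nonneg (α := ℝ) k]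
  set r := ρ / 4 / (k + 1) with hr
  have hrpos : 0 < r := by positivity
  have hrρ : r ≤ ρ / 4 := div_le_self (by positivity) hk1
  have hrk : r * (k + 1) = ρ / 4 := div_mul_cancel₀ _ (by positivity)
  have hre : -r ≤ w.re := (neg_le_neg hw).trans (neg_le_of_abs_le (Complex.abs_re_le_norm w))
  have hexp : -(θ ^ 2 / 2) * (w.re - r) + θ * (A * (‖w‖ + r))
      ≤ (k + 1 : ℕ) * (ρ / 2 * (D ^ 2 / 2 + A * D)) := by
    calc -(θ ^ 2 / 2) * (w.re - r) + θ * (A * (‖w‖ + r))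
        ≤ θ ^ 2 / 2 * (2 * r) + θ * (A * (2 * r)) := by
          nlinarith [mul_le_mul_of_nonneg_left hw (mul_nonneg hθ0 hA),
            mul_le_mul_of_nonneg_left hre (sq_nonneg θ)]
      _ ≤ (D * (k + 1)) ^ 2 / 2 * (2 * r) + D * (k + 1) * (A * (2 * r)) := by gcongr
      _ = (k + 1) * D ^ 2 * (r * (k + 1)) + 2 * A * D * (r * (k + 1)) := by ring
      _ = (k + 1) * (ρ / 2 * (D ^ 2 / 2)) + 1 * (ρ / 2 * (A * D)) := by rw [hrk]; ring
      _ ≤ (k + 1) * (ρ / 2 * (D ^ 2 / 2)) + (k + 1) * (ρ / 2 * (A * D)) := by gcongr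
      _ = (k + 1 : ℕ) * (ρ / 2 * (D ^ 2 / 2 + A * D)) := by push_cast; ring
  have hinv : (r ^ k)⁻¹ = (4 / ρ) ^ k * ((k : ℝ) + 1) ^ k := by
    rw [hr, ← inv_pow, ← mul_pow]
    congr 1
    field_simp
  have hρk : (4 / ρ) ^ k ≤ (1 + 4 / ρ) ^ (k + 1) :=
    (pow_le_pow_left₀ (by positivity) (by linarith) k).trans
      (pow_le_pow_right₀ (by linarith [show 0 < 4 / ρ by positivity]) k.le_succ)
  refine (h.norm_iteratedDeriv_complexKernel_le hθ0 hrpos (by linarith) k).trans ?_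
  rw [div_eq_mul_inv, hinv]
  calc _ ≤ ((k : ℝ) + 1) ^ k * Real.exp ((k + 1 : ℕ) * (ρ / 2 * (D ^ 2 / 2 + A * D)))
        * ((1 + 4 / ρ) ^ (k + 1) * ((k : ℝ) + 1) ^ k) := by
        gcongr
        exact factorial_le_succ_pow k
    _ = _ := by rw [Real.exp_nat_mul, mul_pow]; ring

lemma iteratedDeriv_realKernel (h : IsHolomorphicDrift B ρ A) (θ : ℝ) (k : ℕ) {s : ℝ}
    (hs : |s| < ρ) :
    iteratedDeriv k (realKernel B θ) s = (iteratedDeriv k (complexKernel B θ) s).re := by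
  have hre := iteratedDeriv_clm_comp_ofReal_mul Complex.reCLM Metric.isOpen_ball
    (h.differentiableOn_complexKernel θ) 1 k (x := s) (by simpa using hs)
  simp only [mul_one, one_pow, one_mul, Complex.reCLM_apply] at hre
  exact hre

lemma ofReal_iteratedDeriv_realKernel (h : IsHolomorphicDrift B ρ A) (θ : ℝ) (k : ℕ) :
    ((iteratedDeriv k (realKernel B θ) 0 : ℝ) : ℂ) = iteratedDeriv k (complexKernel B θ) 0 := by
  have him := iteratedDeriv_clm_comp_ofReal_mul Complex.imCLM Metric.isOpen_ball
    (h.differentiableOn_complexKernel θ) 1 k (x := 0) (by simpa using h.radius_pos)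
  have hzero : (fun s : ℝ => (complexKernel B θ s).im) =ᶠ[𝓝 0] fun _ => 0 := by
    filter_upwards [Metric.ball_mem_nhds 0 h.radius_pos] with s hs
    rw [h.complexKernel_ofReal θ (by simpa using hs), Complex.ofReal_im]
  simp only [mul_one, one_pow, one_mul, Complex.imCLM_apply, hzero.iteratedDeriv_eq,
    iteratedDeriv_const, ite_self, Complex.ofReal_zero] at him
  refine Complex.ext ?_ (by simpa using him)
  rw [Complex.ofReal_re, h.iteratedDeriv_realKernel θ k (by simpa using h.radius_pos),
    Complex.ofReal_zero]

lemma neg_one_pow_mul_iteratedDeriv_mem_Icc (h : IsHolomorphicDrift B ρ A) {D : ℝ}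
    (hDA : 8 * Real.exp A ≤ D) (hDρ : 4 ≤ D * ρ) {k : ℕ} (hθ : D * (k + 1) ≤ θ) {s : ℝ}
    (hs : |s| ≤ ρ / 2) :
    (-1) ^ k * iteratedDeriv k (realKernel B θ) s ∈
      Icc ((θ ^ 2 / 2) ^ k * ‖complexKernel B θ s‖ / 2)
        (3 * ((θ ^ 2 / 2) ^ k * ‖complexKernel B θ s‖ / 2)) := by
  have hsρ : |s| < ρ := hs.trans_lt (half_lt_self h.radius_pos)
  have hnear := h.norm_iteratedDeriv_sub_le hDA hDρ hθ (w := s) (by simpa using hs)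
  have hcast : (-((θ : ℂ) ^ 2 / 2)) ^ k * complexKernel B θ s
      = (((-(θ ^ 2 / 2)) ^ k * ‖complexKernel B θ s‖ : ℝ) : ℂ) := by
    conv_lhs => rw [h.complexKernel_ofReal θ hsρ]
    push_cast
    rfl
  rw [hcast] at hnear
  have hre := (Complex.abs_re_le_norm _).trans hnear
  rw [Complex.sub_re, Complex.ofReal_re, ← h.iteratedDeriv_realKernel θ k hsρ] at hre
  set d := iteratedDeriv k (realKernel B θ) s
  have hsq : ((-1 : ℝ) ^ k) * (-1) ^ k = 1 := by rw [← mul_pow]; simp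
  have hsign : (-1) ^ k * (d - (-(θ ^ 2 / 2)) ^ k * ‖complexKernel B θ s‖)
      = (-1) ^ k * d - (θ ^ 2 / 2) ^ k * ‖complexKernel B θ s‖ := by
    rw [neg_pow (θ ^ 2 / 2)]
    linear_combination (-(θ ^ 2 / 2) ^ k * ‖complexKernel B θ s‖) * hsq
  rw [← one_mul |_|, ← abs_neg_one_pow k, ← abs_mul, hsign, abs_le] at hre
  constructor <;> linarith [hre.1, hre.2]

lemma complexKernel_zero (h : IsHolomorphicDrift B ρ A) (θ : ℝ) : complexKernel B θ 0 = 1 := by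
  simp [complexKernel, h.map_zero]

lemma contDiffOn_realKernel (h : IsHolomorphicDrift B ρ A) (θ : ℝ) (k : ℕ) :
    ContDiffOn ℝ k (realKernel B θ) (Ioo (-ρ) ρ) := fun _ hs =>
  ((((h.differentiableOn_complexKernel θ).analyticAt (Metric.isOpen_ball.mem_nhds
    (ofReal_mem_ball (abs_lt.2 hs)))).contDiffAt (n := k)).real_of_complex).contDiffWithinAt

lemma exists_threshold (h : IsHolomorphicDrift B ρ A) :
    ∃ D, 0 ≤ D ∧ 2 * A ≤ D ∧ 8 * Real.exp A ≤ D ∧ 4 ≤ D * ρ := by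
  have hρ := h.radius_pos
  have hA := Real.add_one_le_exp A
  have h4 : 0 < 4 / ρ := by positivity
  refine ⟨8 * Real.exp A + 4 / ρ, by positivity, by linarith [Real.exp_pos A], by linarith, ?_⟩
  rw [add_mul, div_mul_cancel₀ _ hρ.ne']
  linarith [show 0 ≤ 8 * Real.exp A * ρ by positivity]

lemma almostAlternating (h : IsHolomorphicDrift B ρ A) {ν : Measure ℝ} (hν : ∀ᵐ θ ∂ν, 0 ≤ θ)
    (k : ℕ) : AlmostAlternating ν (realKernel B) k := by
  obtain ⟨D, hD, hAD, hDA, hDρ⟩ := h.exists_threshold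
  obtain ⟨E, hE, hsmall⟩ := h.exists_norm_iteratedDeriv_le_pow hD
  have hρ := h.radius_pos
  have hEk : 0 ≤ E ^ (k + 1) * ((k : ℝ) + 1) ^ (2 * k) := by positivity
  refine ⟨-(E ^ (k + 1) * ((k : ℝ) + 1) ^ (2 * k)), 3, E ^ (k + 1) * ((k : ℝ) + 1) ^ (2 * k), ?_⟩
  filter_upwards [Ioo_mem_nhdsGT (show 0 < ρ / 4 / (k + 1) by positivity)] with s hs
  filter_upwards [hν] with θ hθ ξ hξ
  have hξs : |ξ| ≤ ρ / 4 / (k + 1) := by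
    rw [abs_of_pos hξ.1]
    exact hξ.2.trans hs.2.le
  have hξρ : |ξ| ≤ ρ / 4 := hξs.trans (div_le_self (by positivity) (by simp))
  rcases le_total θ (D * (k + 1)) with hθD | hθD
  · have hξsmall : |iteratedDeriv k (realKernel B θ) ξ|
        ≤ E ^ (k + 1) * ((k : ℝ) + 1) ^ (2 * k) := by
      rw [h.iteratedDeriv_realKernel θ k (by linarith)]
      exact (Complex.abs_re_le_norm _).trans (hsmall k θ hθ hθD ξ (by simpa using hξs))
    refine ⟨neg_le_of_abs_le ?_, hξsmall.trans (le_add_of_nonneg_left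
      (by positivity))⟩
    simpa [abs_mul] using hξsmall
  · have hderiv := h.neg_one_pow_mul_iteratedDeriv_mem_Icc hDA hDρ hθD (s := ξ) (by linarith)
    have hderiv0 := h.neg_one_pow_mul_iteratedDeriv_mem_Icc hDA hDρ hθD (s := 0)
      (by rw [abs_zero]; positivity)
    rw [Complex.ofReal_zero, h.complexKernel_zero, norm_one, mul_one] at hderiv0
    have hle_one : ‖complexKernel B θ ξ‖ ≤ 1 := by
      refine (h.norm_complexKernel_le hθ (w := ξ) (by simp; linarith)).trans
        (Real.exp_le_one_iff.2 ?_)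
      have : D ≤ θ := le_trans (le_mul_of_one_le_right hD (by simp)) hθD
      rw [Complex.ofReal_re, Complex.norm_real, Real.norm_of_nonneg hξ.1.le]
      nlinarith [mul_nonneg hθ hξ.1.le]
    have hX : 0 ≤ (θ ^ 2 / 2) ^ k * ‖complexKernel B θ ξ‖ := by positivity
    have hXle : (θ ^ 2 / 2) ^ k * ‖complexKernel B θ ξ‖ ≤ (θ ^ 2 / 2) ^ k :=
      mul_le_of_le_one_right (by positivity) hle_one
    have habs (x : ℝ) : |x| = |(-1) ^ k * x| := by simp [abs_mul]
    refine ⟨by linarith [hderiv.1], ?_⟩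
    rw [habs, habs (iteratedDeriv k _ 0), abs_of_nonneg (by linarith [hderiv.1])]
    linarith [hderiv.2, hderiv0.1, le_abs_self ((-1) ^ k *
      iteratedDeriv k (realKernel B θ) 0)]

lemma exists_pow_two_mul_le (h : IsHolomorphicDrift B ρ A) :
    ∃ E ≥ 0, ∀ (k : ℕ) (θ : ℝ), 0 ≤ θ → θ ^ (2 * k)
      ≤ 2 ^ (k + 1) * ((-1) ^ k * iteratedDeriv k (realKernel B θ) 0)
        + E ^ (k + 1) * ((k : ℝ) + 1) ^ (2 * k) := by
  obtain ⟨D, hD, -, hDA, hDρ⟩ := h.exists_threshold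
  obtain ⟨E, hE, hsmall⟩ := h.exists_norm_iteratedDeriv_le_pow hD
  have hρ := h.radius_pos
  refine ⟨2 * E + (D ^ 2 + 1), by positivity, fun k θ hθ => ?_⟩
  rcases le_total θ (D * (k + 1)) with hθD | hθD
  · have hderiv : -(E ^ (k + 1) * ((k : ℝ) + 1) ^ (2 * k))
        ≤ (-1) ^ k * iteratedDeriv k (realKernel B θ) 0 := by
      refine neg_le_of_abs_le ?_
      rw [abs_mul, abs_neg_one_pow, one_mul, h.iteratedDeriv_realKernel θ k (by simpa using hρ)]
      exact (Complex.abs_re_le_norm _).trans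
        (hsmall k θ hθ hθD _ (by rw [Complex.ofReal_zero, norm_zero]; positivity))
    have hpow : θ ^ (2 * k) ≤ (D ^ 2 + 1) ^ (k + 1) * ((k : ℝ) + 1) ^ (2 * k) := by
      calc θ ^ (2 * k) ≤ (D * (k + 1)) ^ (2 * k) := by gcongr
        _ = (D ^ 2) ^ k * ((k : ℝ) + 1) ^ (2 * k) := by rw [mul_pow, pow_mul]
        _ ≤ (D ^ 2 + 1) ^ (k + 1) * ((k : ℝ) + 1) ^ (2 * k) := by
          gcongr ?_ * _
          exact (pow_le_pow_left₀ (by positivity) (by linarith) k).trans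
            (pow_le_pow_right₀ (by nlinarith) k.le_succ)
    have hadd : (2 * E) ^ (k + 1) + (D ^ 2 + 1) ^ (k + 1) ≤ (2 * E + (D ^ 2 + 1)) ^ (k + 1) :=
      pow_add_pow_le (by positivity) (by positivity) k.succ_ne_zero
    have hscaled := mul_le_mul_of_nonneg_left hderiv (show (0 : ℝ) ≤ 2 ^ (k + 1) by positivity)
    have hadd' := mul_le_mul_of_nonneg_right hadd
      (show (0 : ℝ) ≤ ((k : ℝ) + 1) ^ (2 * k) by positivity)
    rw [mul_pow, add_mul] at hadd'
    linarith
  · have hderiv := (h.neg_one_pow_mul_iteratedDeriv_mem_Icc hDA hDρ hθD (s := 0)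
      (by rw [abs_zero]; positivity)).1
    rw [Complex.ofReal_zero, h.complexKernel_zero, norm_one, mul_one] at hderiv
    calc θ ^ (2 * k) = 2 ^ (k + 1) * ((θ ^ 2 / 2) ^ k / 2) := by
          rw [div_pow, pow_mul, pow_succ]; field
      _ ≤ 2 ^ (k + 1) * ((-1) ^ k * iteratedDeriv k (realKernel B θ) 0) := by
          gcongr
      _ ≤ _ := le_add_of_nonneg_right (by positivity)

variable {ν : Measure ℝ} [IsFiniteMeasure ν]

lemma integral_iteratedDeriv_realKernel_zero (h : IsHolomorphicDrift B ρ A) (hν : ∀ᵐ θ ∂ν, 0 ≤ θ)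
    (hint : ∀ᶠ s in 𝓝[>] (0 : ℝ), Integrable (realKernel B · s) ν)
    (hfreq : ∃ᶠ s in 𝓝[>] (0 : ℝ), ∫ θ, realKernel B θ s ∂ν = 1) (k : ℕ) :
    Integrable (fun θ => iteratedDeriv k (realKernel B θ) 0) ν ∧
      ∫ θ, iteratedDeriv k (realKernel B θ) 0 ∂ν
        = if k = 0 then 1 else 0 :=
  integral_iteratedDeriv_zero_eq h.radius_pos h.contDiffOn_realKernel
    (h.almostAlternating hν) hint hfreq k

lemma exists_integrable_exp (h : IsHolomorphicDrift B ρ A) (hν : ∀ᵐ θ ∂ν, 0 ≤ θ)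
    (hint : ∀ᶠ s in 𝓝[>] (0 : ℝ), Integrable (realKernel B · s) ν)
    (hfreq : ∃ᶠ s in 𝓝[>] (0 : ℝ), ∫ θ, realKernel B θ s ∂ν = 1) :
    ∃ y > 0, Integrable (fun θ => Real.exp (y * θ)) ν := by
  obtain ⟨E, hE, hpow⟩ := h.exists_pow_two_mul_le
  have hderiv := h.integral_iteratedDeriv_realKernel_zero hν hint hfreq
  have hdom (k : ℕ) : Integrable (fun θ => 2 ^ (k + 1) * ((-1) ^ k *
      iteratedDeriv k (realKernel B θ) 0)
        + E ^ (k + 1) * ((k : ℝ) + 1) ^ (2 * k)) ν :=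
    (((hderiv k).1.const_mul _).const_mul _).add (integrable_const _)
  have hmom (k : ℕ) : Integrable (fun θ => θ ^ (2 * k)) ν :=
    (hdom k).mono' (by fun_prop) (hν.mono fun θ hθ => by
      rw [Real.norm_of_nonneg (by positivity)]
      exact hpow k θ hθ)
  set V := ν.real univ
  have hV : 0 ≤ V := measureReal_nonneg
  refine exists_integrable_exp_of_moment_le (E := 2 + E * (1 + V)) (by positivity) hmom fun k => ?_
  have hsign : (-1 : ℝ) ^ k * (if k = 0 then 1 else 0) ≤ 1 := by split_ifs with hk <;> simp [hk]
  have hk1 : (1 : ℝ) ≤ ((k : ℝ) + 1) ^ (2 * k) := one_le_pow₀ (by simp)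
  have hV1 : V ≤ (1 + V) ^ (k + 1) :=
    (le_add_of_nonneg_left zero_le_one).trans (le_self_pow₀ (by linarith) k.succ_ne_zero)
  calc ∫ θ, θ ^ (2 * k) ∂ν
      ≤ ∫ θ, 2 ^ (k + 1) * ((-1) ^ k * iteratedDeriv k (realKernel B θ) 0)
          + E ^ (k + 1) * ((k : ℝ) + 1) ^ (2 * k) ∂ν :=
        integral_mono_ae (hmom k) (hdom k) (hν.mono fun θ hθ => hpow k θ hθ)
    _ = 2 ^ (k + 1) * ((-1) ^ k * if k = 0 then 1 else 0)
          + V * (E ^ (k + 1) * ((k : ℝ) + 1) ^ (2 * k)) := by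
        rw [integral_add (((hderiv k).1.const_mul _).const_mul _) (integrable_const _),
          integral_const_mul, integral_const_mul, (hderiv k).2, integral_const, smul_eq_mul]
    _ ≤ 2 ^ (k + 1) * ((k : ℝ) + 1) ^ (2 * k)
          + (1 + V) ^ (k + 1) * (E ^ (k + 1) * ((k : ℝ) + 1) ^ (2 * k)) := by
        gcongr
        exact hsign.trans hk1
    _ = (2 ^ (k + 1) + (E * (1 + V)) ^ (k + 1)) * ((k : ℝ) + 1) ^ (2 * k) := by
        rw [mul_pow]; ring
    _ ≤ (2 + E * (1 + V)) ^ (k + 1) * ((k : ℝ) + 1) ^ (2 * k) := by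
        gcongr
        exact pow_add_pow_le zero_le_two (by positivity) k.succ_ne_zero

end IsHolomorphicDrift

/-! ### Flatness on a horoball -/

lemma norm_sub_sum_iteratedDeriv_le {f : ℂ → ℂ} {ρ M : ℝ}
    (hf : DifferentiableOn ℂ f (Metric.ball 0 ρ)) {w : ℂ} (hw : ‖w‖ < ρ) (n : ℕ)
    (hM : ∀ u ∈ Icc (0 : ℝ) 1, ‖iteratedDeriv (n + 1) f (u * w)‖ ≤ M) :
    ‖f w - ∑ j ∈ Finset.range (n + 1), iteratedDeriv j f 0 / j.factorial * w ^ j‖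
      ≤ M * ‖w‖ ^ (n + 1) / n.factorial := by
  have hmem : ∀ u ∈ Icc (0 : ℝ) 1, (u : ℂ) * w ∈ Metric.ball 0 ρ := fun u hu => by
    rw [mem_ball_zero_iff, norm_mul, Complex.norm_real, Real.norm_of_nonneg hu.1]
    exact (mul_le_of_le_one_left (norm_nonneg w) hu.2).trans_lt hw
  have hsmooth : ∀ u ∈ Icc (0 : ℝ) 1, ContDiffAt ℝ (n + 1) (fun u : ℝ => f (u * w)) u :=
    fun u hu => by
      have hfu : ContDiffAt ℝ (n + 1) f (u * w) :=
        (hf.analyticAt (Metric.isOpen_ball.mem_nhds (hmem u hu))).contDiffAt.restrict_scalars ℝ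
      exact hfu.comp u (Complex.ofRealCLM.contDiff.contDiffAt.mul contDiffAt_const)
  have hderiv : ∀ j ≤ n + 1, ∀ u ∈ Icc (0 : ℝ) 1,
      iteratedDerivWithin j (fun u : ℝ => f (u * w)) (Icc 0 1) u
        = w ^ j * iteratedDeriv j f (u * w) := fun j hj u hu => by
    rw [iteratedDerivWithin_eq_iteratedDeriv (uniqueDiffOn_Icc zero_lt_one)
      ((hsmooth u hu).of_le (by exact_mod_cast hj)) hu]
    exact iteratedDeriv_clm_comp_ofReal_mul (.id ℝ ℂ) Metric.isOpen_ball hf w j (hmem u hu)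
  have htaylor := taylor_mean_remainder_bound (f := fun u : ℝ => f (u * w)) (n := n)
    (C := M * ‖w‖ ^ (n + 1)) zero_le_one (fun u hu => (hsmooth u hu).contDiffWithinAt)
    (right_mem_Icc.2 zero_le_one) fun u hu => by
      rw [hderiv _ le_rfl u hu, norm_mul, norm_pow, mul_comm]
      gcongr
      exact hM u hu
  have hsum : taylorWithinEval (fun u : ℝ => f (u * w)) n (Icc 0 1) 0 1
      = ∑ j ∈ Finset.range (n + 1), iteratedDeriv j f 0 / j.factorial * w ^ j := by
    rw [taylor_within_apply]
    refine Finset.sum_congr rfl fun j hj => ?_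
    rw [hderiv j (Finset.mem_range.1 hj).le 0 (left_mem_Icc.2 zero_le_one), Complex.real_smul]
    push_cast
    simp only [sub_zero, one_pow, zero_mul]
    ring
  simpa [hsum] using htaylor

lemma exists_mul_factorial_mul_pow_le {x : ℝ} (hx : 0 < x) (hx1 : 4 * Real.exp 1 * x ≤ 1) :
    ∃ n : ℕ, ((n : ℝ) + 1) * (n + 1).factorial * (2 * x) ^ (n + 1)
      ≤ Real.exp (1 - 1 / (4 * Real.exp 1 * x)) := by
  have hpos : 0 < 4 * Real.exp 1 * x := by positivity
  obtain ⟨n, hn⟩ : ∃ n, ⌊1 / (4 * Real.exp 1 * x)⌋₊ = n + 1 :=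
    Nat.exists_eq_add_one.2 (Nat.floor_pos.2 ((one_le_div hpos).2 hx1))
  have hfloor := Nat.floor_le (one_div_pos.2 hpos).le
  have hlt := Nat.lt_floor_add_one (1 / (4 * Real.exp 1 * x))
  rw [hn, le_div_iff₀ hpos] at hfloor
  rw [hn] at hlt
  push_cast at hfloor hlt
  have htwo : (n : ℝ) + 1 ≤ 2 ^ (n + 1) := by exact_mod_cast (n + 1).lt_two_pow_self.le
  have hfac : ((n + 1).factorial : ℝ) ≤ ((n : ℝ) + 1) ^ (n + 1) := by
    exact_mod_cast (n + 1).factorial_le_pow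
  have hbase : 4 * (((n : ℝ) + 1) * x) ≤ Real.exp (-1) := by
    rw [Real.exp_neg, ← one_div, le_div_iff₀ (Real.exp_pos 1)]
    linarith
  refine ⟨n, ?_⟩
  calc ((n : ℝ) + 1) * (n + 1).factorial * (2 * x) ^ (n + 1)
      ≤ 2 ^ (n + 1) * ((n : ℝ) + 1) ^ (n + 1) * (2 * x) ^ (n + 1) := by gcongr
    _ = (4 * (((n : ℝ) + 1) * x)) ^ (n + 1) := by rw [← mul_pow, ← mul_pow]; ring
    _ ≤ Real.exp (-1) ^ (n + 1) := by gcongr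
    _ = Real.exp (-(n + 1)) := by rw [← Real.exp_nat_mul]; push_cast; ring_nf
    _ ≤ _ := Real.exp_le_exp.2 (by linarith)

namespace IsHolomorphicDrift

variable {B : ℂ → ℂ} {ρ A θ : ℝ}

lemma norm_complexKernel_le_of_horoball (h : IsHolomorphicDrift B ρ A) (hθ : 0 ≤ θ) {w : ℂ}
    (hw : ‖w‖ < ρ) (hre : ‖w‖ ^ 2 ≤ w.re) : ‖complexKernel B θ w‖ ≤ Real.exp (A ^ 2 / 2) := by
  refine (h.norm_complexKernel_le hθ hw).trans (Real.exp_le_exp.2 ?_)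
  nlinarith [mul_le_mul_of_nonneg_left hre (sq_nonneg θ), sq_nonneg (θ * ‖w‖ - A)]

/-- Cauchy's estimate on the disc of radius `y / (θ + 2 * A + 2 * y / ρ)`. -/
lemma norm_iteratedDeriv_le_of_horoball (h : IsHolomorphicDrift B ρ A) {y : ℝ} (hy : 0 < y)
    (hθ : 0 ≤ θ) {w : ℂ} (hw : ‖w‖ < ρ / 2) (hre : ‖w‖ ^ 2 ≤ w.re) (k : ℕ) :
    ‖iteratedDeriv k (complexKernel B θ) w‖
      ≤ Real.exp (A ^ 2 / 2 + y * (A + y / ρ)) * Real.exp (y * θ)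
        * (k.factorial ^ 2 * (2 / y ^ 2) ^ k) := by
  have hρ := h.radius_pos
  have hA := h.lipschitz_nonneg
  have hyρ : 0 < y / ρ := by positivity
  set q := θ + 2 * A + 2 * (y / ρ) with hq
  have hqpos : 0 < q := by positivity
  have hrρ : y / q ≤ ρ / 2 := by
    rw [div_le_iff₀ hqpos]
    calc y = ρ / 2 * (2 * (y / ρ)) := by field
      _ ≤ ρ / 2 * q := by gcongr; linarith
  have hrq : θ * (θ + 2 * A) * (y / q) ≤ θ * y := by
    rw [mul_assoc]
    gcongr
    rw [mul_div_assoc', div_le_iff₀ hqpos, mul_comm]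
    gcongr
    linarith
  have hexp : -(θ ^ 2 / 2) * (w.re - y / q) + θ * (A * (‖w‖ + y / q))
      ≤ A ^ 2 / 2 + y * θ / 2 := by
    nlinarith [mul_le_mul_of_nonneg_left hre (sq_nonneg θ), sq_nonneg (θ * ‖w‖ - A)]
  have hpow : (q / y) ^ k ≤ k.factorial * (2 / y ^ 2) ^ k * Real.exp (y * q / 2) := by
    have hfac := Real.pow_div_factorial_le_exp (x := y * q / 2) (by positivity) k
    rw [div_le_iff₀' (by positivity)] at hfac
    calc (q / y) ^ k = (2 / y ^ 2) ^ k * (y * q / 2) ^ k := by rw [← mul_pow]; congr 1; field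
      _ ≤ (2 / y ^ 2) ^ k * (k.factorial * Real.exp (y * q / 2)) := by gcongr
      _ = _ := by ring
  refine (h.norm_iteratedDeriv_complexKernel_le hθ (div_pos hy hqpos) (by linarith) k).trans ?_
  rw [div_eq_mul_inv, ← inv_pow, inv_div]
  calc _ ≤ k.factorial * Real.exp (A ^ 2 / 2 + y * θ / 2)
        * (k.factorial * (2 / y ^ 2) ^ k * Real.exp (y * q / 2)) := by gcongr
    _ = Real.exp (A ^ 2 / 2 + y * θ / 2) * Real.exp (y * q / 2)
        * (k.factorial ^ 2 * (2 / y ^ 2) ^ k) := by ring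
    _ = _ := by
      rw [← Real.exp_add, ← Real.exp_add, hq]
      ring_nf

lemma norm_sub_sum_iteratedDeriv_le_of_horoball (h : IsHolomorphicDrift B ρ A) {y : ℝ} (hy : 0 < y)
    (hθ : 0 ≤ θ) {w : ℂ} (hw : ‖w‖ < ρ / 2) (hre : ‖w‖ ^ 2 ≤ w.re) (n : ℕ) :
    ‖complexKernel B θ w
        - ∑ j ∈ Finset.range (n + 1), iteratedDeriv j (complexKernel B θ) 0 / j.factorial * w ^ j‖
      ≤ Real.exp (A ^ 2 / 2 + y * (A + y / ρ)) * Real.exp (y * θ)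
        * (((n : ℝ) + 1) * (n + 1).factorial * (2 * (‖w‖ / y ^ 2)) ^ (n + 1)) := by
  have hρ := h.radius_pos
  refine (norm_sub_sum_iteratedDeriv_le (h.differentiableOn_complexKernel θ) (by linarith) n
    fun u hu => h.norm_iteratedDeriv_le_of_horoball hy hθ (w := u * w) ?_ ?_ (n + 1)).trans_eq ?_
  · rw [norm_mul, Complex.norm_real, Real.norm_of_nonneg hu.1]
    exact (mul_le_of_le_one_left (norm_nonneg w) hu.2).trans_lt hw
  · rw [norm_mul, Complex.norm_real, Real.norm_of_nonneg hu.1, Complex.re_ofReal_mul]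
    nlinarith [hu.1, hu.2, mul_nonneg hu.1 (sub_nonneg.2 hu.2), mul_le_mul_of_nonneg_left hre hu.1,
      mul_nonneg (mul_nonneg hu.1 (sub_nonneg.2 hu.2)) (sq_nonneg ‖w‖)]
  · have hfac : (n.factorial : ℝ) ≠ 0 := by positivity
    rw [Nat.factorial_succ, div_eq_iff hfac]
    push_cast
    rw [mul_pow, div_pow, mul_pow, div_pow]
    ring

variable {ν : Measure ℝ} [IsFiniteMeasure ν]

lemma integrable_complexKernel_of_horoball (h : IsHolomorphicDrift B ρ A) (hν : ∀ᵐ θ ∂ν, 0 ≤ θ)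
    {w : ℂ} (hw : ‖w‖ < ρ) (hre : ‖w‖ ^ 2 ≤ w.re) : Integrable (complexKernel B · w) ν :=
  .of_bound (by unfold complexKernel; fun_prop) (Real.exp (A ^ 2 / 2))
    (hν.mono fun _ hθ => h.norm_complexKernel_le_of_horoball hθ hw hre)

lemma norm_integral_complexKernel_sub_one_le (h : IsHolomorphicDrift B ρ A)
    (hν : ∀ᵐ θ ∂ν, 0 ≤ θ) {y : ℝ} (hy : 0 < y) (hexp : Integrable (fun θ => Real.exp (y * θ)) ν)
    (hderiv : ∀ k, Integrable (fun θ => iteratedDeriv k (realKernel B θ) 0) ν ∧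
      ∫ θ, iteratedDeriv k (realKernel B θ) 0 ∂ν = if k = 0 then 1 else 0)
    {w : ℂ} (hw0 : w ≠ 0) (hw : ‖w‖ < ρ / 2) (hre : ‖w‖ ^ 2 ≤ w.re)
    (hwy : 4 * Real.exp 1 * ‖w‖ ≤ y ^ 2) :
    ‖∫ θ, complexKernel B θ w ∂ν - 1‖
      ≤ Real.exp (A ^ 2 / 2 + y * (A + y / ρ)) * (∫ θ, Real.exp (y * θ) ∂ν) * Real.exp 1
        * Real.exp (-(y ^ 2 / (4 * Real.exp 1)) / ‖w‖) := by
  have := h.radius_pos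
  have hnorm : 0 < ‖w‖ := norm_pos_iff.2 hw0
  obtain ⟨n, hn⟩ := exists_mul_factorial_mul_pow_le (x := ‖w‖ / y ^ 2) (by positivity)
    (by rw [mul_div_assoc']; exact (div_le_one (by positivity)).2 hwy)
  have hcast (j : ℕ) (θ : ℝ) : iteratedDeriv j (complexKernel B θ) 0 / j.factorial * w ^ j
      = ((iteratedDeriv j (realKernel B θ) 0 : ℝ) : ℂ) * ((w ^ j) / j.factorial) := by
    rw [h.ofReal_iteratedDeriv_realKernel]
    ring
  have hterm (j : ℕ) :
      Integrable (fun θ => iteratedDeriv j (complexKernel B θ) 0 / j.factorial * w ^ j) ν := by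
    simp only [hcast]
    exact (hderiv j).1.ofReal.mul_const _
  have hsum : ∫ θ, ∑ j ∈ Finset.range (n + 1),
      iteratedDeriv j (complexKernel B θ) 0 / j.factorial * w ^ j ∂ν = 1 := by
    rw [integral_finsetSum _ fun j _ => hterm j]
    simp only [hcast, integral_mul_const, integral_complex_ofReal, (hderiv _).2]
    simp [Finset.sum_range_succ']
  have hkernel := h.integrable_complexKernel_of_horoball hν (by linarith) hre
  rw [← hsum, ← integral_sub hkernel (integrable_finsetSum _ fun j _ => hterm j)]
  refine (norm_integral_le_of_norm_le ((hexp.const_mul _).mul_const _) (hν.mono fun θ hθ =>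
    h.norm_sub_sum_iteratedDeriv_le_of_horoball hy hθ hw hre n)).trans ?_
  rw [integral_mul_const, integral_const_mul, mul_assoc _ (Real.exp 1), ← Real.exp_add]
  gcongr
  refine hn.trans_eq (congrArg _ ?_)
  field

end IsHolomorphicDrift

/-! ### Uniqueness from flatness -/

lemma differentiableOn_integral_of_norm_le {X : Type*} [MeasurableSpace X] {μ : Measure X}
    [IsFiniteMeasure μ] {U : Set ℂ} (hU : IsOpen U) {K : ℂ → X → ℂ} {C : ℝ}
    (hmeas : ∀ z ∈ U, AEStronglyMeasurable (K z) μ)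
    (hmeas_deriv : ∀ z ∈ U, AEStronglyMeasurable (fun x => deriv (K · x) z) μ)
    (hdiff : ∀ x, DifferentiableOn ℂ (K · x) U) (hbound : ∀ᵐ x ∂μ, ∀ z ∈ U, ‖K z x‖ ≤ C) :
    DifferentiableOn ℂ (fun z => ∫ x, K z x ∂μ) U := fun z₀ hz₀ => by
  obtain ⟨r, hr, hrU⟩ := Metric.isOpen_iff.1 hU z₀ hz₀
  have hsub : ∀ z ∈ Metric.ball z₀ (r / 2), Metric.closedBall z (r / 4) ⊆ U := fun z hz =>
    (Metric.closedBall_subset_ball' (by rw [Metric.mem_ball] at hz; linarith)).trans hrU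
  refine (hasDerivAt_integral_of_dominated_loc_of_deriv_le (F' := fun z x => deriv (K · x) z)
    (bound := fun _ => C / (r / 4)) (Metric.ball_mem_nhds z₀ (half_pos hr))
    ((hU.eventually_mem hz₀).mono hmeas) ?_ (hmeas_deriv z₀ hz₀) ?_ (integrable_const _)
    ?_).2.differentiableAt.differentiableWithinAt
  · exact .of_bound (hmeas z₀ hz₀) C (hbound.mono fun x hx => hx z₀ hz₀)
  · refine hbound.mono fun x hx z hz => Complex.norm_deriv_le_of_forall_mem_sphere_norm_le
      (by positivity) (DifferentiableOn.diffContOnCl ?_) fun w hw =>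
        hx w (hsub z hz (Metric.sphere_subset_closedBall hw))
    rw [closure_ball _ (by positivity)]
    exact (hdiff x).mono (hsub z hz)
  · exact ae_of_all _ fun x z hz => ((hdiff x).differentiableAt (hU.mem_nhds
      (hsub z hz (Metric.mem_closedBall_self (by positivity))))).hasDerivAt

lemma differentiableOn_integral_complexKernel {ν : Measure ℝ} [IsFiniteMeasure ν] {U : Set ℂ}
    (hU : IsOpen U) {B : ℂ → ℂ} (hB : DifferentiableOn ℂ B U) {C : ℝ}
    (hbound : ∀ᵐ θ ∂ν, ∀ z ∈ U, ‖complexKernel B θ z‖ ≤ C) :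
    DifferentiableOn ℂ (fun z => ∫ θ, complexKernel B θ z ∂ν) U := by
  refine differentiableOn_integral_of_norm_le hU
    (fun z _ => by unfold complexKernel; fun_prop) (fun z hz => ?_)
    (fun θ => by unfold complexKernel; fun_prop) hbound
  have hBz := (hB.differentiableAt (hU.mem_nhds hz)).hasDerivAt
  have hderiv (θ : ℝ) : deriv (complexKernel B θ) z
      = complexKernel B θ z * (-((θ : ℂ) ^ 2 / 2) + θ * deriv B z) := by
    have hlin := (hasDerivAt_id z).const_mul (-((θ : ℂ) ^ 2 / 2))
    rw [mul_one] at hlin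
    exact (hlin.add (hBz.const_mul (θ : ℂ))).cexp.deriv
  simp only [hderiv]
  unfold complexKernel
  fun_prop

/-- A Phragmén–Lindelöf multiplier that decays like `exp (-m x log x)` on the positive reals while
growing only exponentially in `‖z‖` on the right half-plane. -/
noncomputable def logMultiplier (m : ℝ) (z : ℂ) : ℂ :=
  Complex.exp (-(m : ℂ) * ((z + 1) * Complex.log (z + 1)))

lemma norm_logMultiplier_le {m : ℝ} (hm : 0 ≤ m) {z : ℂ} (hz : 0 ≤ z.re) :
    ‖logMultiplier m z‖
      ≤ Real.exp (m * (Real.pi / 2) * ‖z‖) * Real.exp (-(m * (z.re * Real.log (z.re + 1)))) := by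
  have hre : (z + 1).re = z.re + 1 := by simp
  have hexponent : (-(m : ℂ) * ((z + 1) * Complex.log (z + 1))).re
      = m * (z.im * (z + 1).arg) - m * ((z.re + 1) * Real.log ‖z + 1‖) := by
    rw [← Complex.ofReal_neg, Complex.re_ofReal_mul, Complex.mul_re, Complex.log_re,
      Complex.log_im, hre, Complex.add_im, Complex.one_im, add_zero]
    ring
  have harg : z.im * (z + 1).arg ≤ Real.pi / 2 * ‖z‖ := by
    calc z.im * (z + 1).arg ≤ |z.im| * |(z + 1).arg| := (le_abs_self _).trans_eq (abs_mul _ _)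
      _ ≤ ‖z‖ * (Real.pi / 2) := by
        gcongr
        · exact Complex.abs_im_le_norm z
        · exact Complex.abs_arg_le_pi_div_two_iff.2 (by linarith)
      _ = _ := mul_comm _ _
  have hlog : z.re * Real.log (z.re + 1) ≤ (z.re + 1) * Real.log ‖z + 1‖ := by
    have hlog_le := Real.log_le_log (by linarith) (hre ▸ Complex.re_le_norm (z + 1))
    have hlog_nonneg : 0 ≤ Real.log (z.re + 1) := Real.log_nonneg (by linarith)
    gcongr
    linarith
  rw [logMultiplier, Complex.norm_exp, hexponent, ← Real.exp_add, Real.exp_le_exp]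
  linarith [mul_le_mul_of_nonneg_left harg hm, mul_le_mul_of_nonneg_left hlog hm]

lemma tendsto_exp_pow_mul_exp_neg_mul_log {m : ℝ} (hm : 0 < m) (n : ℕ) :
    Tendsto (fun x : ℝ => Real.exp x ^ n * Real.exp (-(m * (x * Real.log (x + 1))))) atTop
      (𝓝 0) := by
  have hlog : Tendsto (fun x : ℝ => (n : ℝ) + -(m * Real.log (x + 1))) atTop atBot :=
    tendsto_atBot_add_const_left _ _ (tendsto_neg_atTop_atBot.comp
      ((Real.tendsto_log_atTop.comp (tendsto_atTop_add_const_right _ 1 tendsto_id)).const_mul_atTop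
        hm))
  refine (Real.tendsto_exp_atBot.comp (tendsto_id.atTop_mul_atBot₀ hlog)).congr fun x => ?_
  rw [Function.comp_apply, ← Real.exp_nat_mul, ← Real.exp_add, id_eq]
  congr 1
  ring

lemma eqOn_zero_of_norm_le_exp_neg {H : ℂ → ℂ} {C κ : ℝ} (hκ : 0 < κ)
    (hdiff : ∀ z, 0 ≤ z.re → DifferentiableAt ℂ H z)
    (hbound : ∀ z, 0 ≤ z.re → ‖H z‖ ≤ C * Real.exp (-κ * ‖z‖)) : EqOn H 0 {z | 0 ≤ z.re} := by
  have hC : 0 ≤ C := by simpa using (norm_nonneg _).trans (hbound 0 le_rfl)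
  set m := κ / (Real.pi / 2) with hm
  have hmpos : 0 < m := by positivity
  have hdecay : ∀ z : ℂ, 0 ≤ z.re → ‖H z * logMultiplier m z‖
      ≤ C * Real.exp (-(m * (z.re * Real.log (z.re + 1)))) := fun z hz => by
    calc ‖H z * logMultiplier m z‖
        ≤ C * Real.exp (-κ * ‖z‖) * (Real.exp (m * (Real.pi / 2) * ‖z‖)
          * Real.exp (-(m * (z.re * Real.log (z.re + 1))))) := by
          rw [norm_mul]
          gcongr
          exacts [hbound z hz, norm_logMultiplier_le hmpos.le hz]
      _ = C * (Real.exp (-κ * ‖z‖) * Real.exp (κ * ‖z‖))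
          * Real.exp (-(m * (z.re * Real.log (z.re + 1)))) := by
          rw [hm, div_mul_cancel₀ _ (by positivity)]; ring
      _ = _ := by rw [← Real.exp_add]; simp
  have hle : ∀ z : ℂ, 0 ≤ z.re → ‖H z * logMultiplier m z‖ ≤ C := fun z hz =>
    (hdecay z hz).trans (mul_le_of_le_one_right hC (Real.exp_le_one_iff.2 (neg_nonpos.2 (by
      have := Real.log_nonneg (show (1 : ℝ) ≤ z.re + 1 by linarith)
      positivity))))
  have hzero := PhragmenLindelof.eq_zero_on_right_half_plane_of_superexponential_decay
    (f := fun z => H z * logMultiplier m z) (DifferentiableOn.diffContOnCl ?_)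
    ⟨1, by norm_num, 0, .of_bound C (eventually_inf_principal.2 (.of_forall fun z hz => ?_))⟩
    (fun n => ?_) ⟨C, fun x => hle _ (by simp)⟩
  · intro z hz
    exact (mul_eq_zero.1 (hzero hz)).resolve_right (Complex.exp_ne_zero _)
  · rw [Complex.closure_setOfPred_lt_re]
    intro z hz
    have hslit : z + 1 ∈ Complex.slitPlane := .inl (by
      rw [Complex.add_re, Complex.one_re]; linarith [show 0 ≤ z.re from hz])
    have := hdiff z hz
    unfold logMultiplier
    exact DifferentiableAt.differentiableWithinAt (by fun_prop (disch := assumption))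
  · simpa using hle z (le_of_lt hz)
  · refine squeeze_zero' (.of_forall fun x => by positivity) ?_
      (by simpa using (tendsto_exp_pow_mul_exp_neg_mul_log hmpos n).const_mul C)
    filter_upwards [eventually_ge_atTop 0] with x hx
    rw [mul_left_comm]
    gcongr
    exact hdecay x (by simpa using hx)

lemma inv_add_ofReal_mem_horoball {v : ℂ} {δ R : ℝ} (hδ : 0 < δ) (hR : 1 < R) (hRδ : 1 / δ < R)
    (hv : 0 ≤ v.re) :
    v + R ≠ 0 ∧ ‖(v + R)⁻¹‖ < δ ∧ ‖(v + R)⁻¹‖ ^ 2 < (v + R)⁻¹.re ∧ ‖v‖ ≤ ‖v + R‖ := by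
  have hre : R ≤ (v + R).re := by simpa using hv
  have hle := hre.trans (Complex.re_le_norm (v + R))
  have hpos : 0 < ‖v + R‖ := (zero_lt_one.trans hR).trans_le hle
  refine ⟨norm_pos_iff.1 hpos, ?_, ?_, ?_⟩
  · rw [norm_inv, inv_lt_comm₀ hpos hδ, ← one_div]
    linarith
  · rw [norm_inv, Complex.inv_re, Complex.normSq_eq_norm_sq, inv_pow, inv_eq_one_div]
    gcongr
    linarith
  · rw [← sq_le_sq₀ (norm_nonneg _) hpos.le, ← Complex.normSq_eq_norm_sq,
      ← Complex.normSq_eq_norm_sq, Complex.normSq_apply, Complex.normSq_apply]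
    simp only [Complex.add_re, Complex.add_im, Complex.ofReal_re, Complex.ofReal_im, add_zero]
    nlinarith

namespace IsHolomorphicDrift

variable {B : ℂ → ℂ} {ρ A : ℝ} {ν : Measure ℝ} [IsFiniteMeasure ν]

/-- In the coordinate `v = 1 / w` a horoball at `0` becomes a half-plane. -/
lemma integral_complexKernel_eventually_eq_one_of_flat (h : IsHolomorphicDrift B ρ A)
    (hν : ∀ᵐ θ ∂ν, 0 ≤ θ) {C κ δ : ℝ} (hC : 0 ≤ C) (hκ : 0 < κ) (hδ : 0 < δ) (hδρ : δ ≤ ρ)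
    (hflat : ∀ w : ℂ, w ≠ 0 → ‖w‖ < δ → ‖w‖ ^ 2 ≤ w.re →
      ‖∫ θ, complexKernel B θ w ∂ν - 1‖ ≤ C * Real.exp (-κ / ‖w‖)) :
    ∀ᶠ s : ℝ in 𝓝[>] 0, ∫ θ, complexKernel B θ s ∂ν = 1 := by
  set R := 1 + 1 / δ
  have hRpos : 0 < R := by positivity
  have hshift (v : ℂ) (hv : 0 ≤ v.re) := inv_add_ofReal_mem_horoball (R := R) hδ
    (by linarith [one_div_pos.2 hδ]) (by linarith) hv
  set U : Set ℂ := {w | ‖w‖ < δ ∧ ‖w‖ ^ 2 < w.re} with hU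
  have hUopen : IsOpen U := by
    rw [hU, ofPred_and]
    exact (isOpen_lt (by fun_prop) (by fun_prop)).inter (isOpen_lt (by fun_prop) (by fun_prop))
  have hdiff : DifferentiableOn ℂ (fun w => ∫ θ, complexKernel B θ w ∂ν) U :=
    differentiableOn_integral_complexKernel hUopen
      (h.differentiableOn.mono fun w hw => mem_ball_zero_iff.2 (hw.1.trans_le hδρ))
      (hν.mono fun θ hθ w hw => h.norm_complexKernel_le_of_horoball hθ (hw.1.trans_le hδρ) hw.2.le)
  have hzero : EqOn (fun v : ℂ => ∫ θ, complexKernel B θ (v + R)⁻¹ ∂ν - 1) 0 {v | 0 ≤ v.re} := by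
    refine eqOn_zero_of_norm_le_exp_neg (C := C) hκ (fun v hv => ?_) fun v hv => ?_
    · obtain ⟨hne, hδv, hsq, -⟩ := hshift v hv
      have hinv : DifferentiableAt ℂ (fun v : ℂ => (v + R)⁻¹) v := by
        fun_prop (disch := assumption)
      exact ((hdiff.differentiableAt (hUopen.mem_nhds ⟨hδv, hsq⟩)).comp v hinv).sub_const 1
    · obtain ⟨hne, hδv, hsq, hle⟩ := hshift v hv
      refine (hflat _ (inv_ne_zero hne) hδv hsq.le).trans ?_
      rw [norm_inv, div_inv_eq_mul, neg_mul, neg_mul]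
      gcongr
  filter_upwards [Ioo_mem_nhdsGT (inv_pos.2 hRpos)] with s hs
  have hre : 0 ≤ ((s⁻¹ - R : ℝ) : ℂ).re := by
    rw [Complex.ofReal_re, sub_nonneg]
    exact (le_inv_comm₀ hRpos hs.1).2 hs.2.le
  simpa [sub_eq_zero] using hzero hre

theorem integral_complexKernel_eventually_eq_one (h : IsHolomorphicDrift B ρ A)
    (hν : ∀ᵐ θ ∂ν, 0 ≤ θ) (hfreq : ∃ᶠ s in 𝓝[>] 0, ∫ θ, realKernel B θ s ∂ν = 1) :
    ∀ᶠ s : ℝ in 𝓝[>] 0, ∫ θ, complexKernel B θ s ∂ν = 1 := by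
  have hint : ∀ᶠ s : ℝ in 𝓝[>] 0, Integrable (realKernel B · s) ν := by
    filter_upwards [Ioo_mem_nhdsGT (lt_min h.radius_pos one_pos)] with s hs
    have hnorm : ‖(s : ℂ)‖ = s := by rw [Complex.norm_real, Real.norm_of_nonneg hs.1.le]
    refine (h.integrable_complexKernel_of_horoball hν ?_ ?_).re <;> rw [hnorm]
    · exact hs.2.trans_le (min_le_left _ _)
    · rw [Complex.ofReal_re]
      nlinarith [hs.1, hs.2.trans_le (min_le_right _ _)]
  obtain ⟨y, hy, hexp⟩ := h.exists_integrable_exp hν hint hfreq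
  have hρ := h.radius_pos
  refine h.integral_complexKernel_eventually_eq_one_of_flat hν (κ := y ^ 2 / (4 * Real.exp 1))
    (δ := min (ρ / 2) (y ^ 2 / (4 * Real.exp 1))) ?_ (by positivity) (by positivity)
    ((min_le_left _ _).trans (by linarith)) fun w hw0 hw hre =>
      h.norm_integral_complexKernel_sub_one_le hν hy hexp
        (h.integral_iteratedDeriv_realKernel_zero hν hint hfreq) hw0
        (hw.trans_le (min_le_left _ _)) hre
        ((le_div_iff₀' (by positivity)).1 (hw.le.trans (min_le_right _ _)))
  have : 0 ≤ ∫ θ, Real.exp (y * θ) ∂ν := integral_nonneg fun θ => (Real.exp_pos _).le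
  positivity

end IsHolomorphicDrift

/-! ### Analyticity in real time -/

lemma exists_differentiableOn_ball_eq_ofReal {α : ℝ → ℝ} {x : ℝ} (h : AnalyticAt ℝ α x) :
    ∃ r > 0, ∃ f : ℂ → ℂ, DifferentiableOn ℂ f (Metric.ball (x : ℂ) r) ∧
      ∀ s : ℝ, |s - x| < r → f s = α s := by
  obtain ⟨p, hp⟩ := h
  obtain ⟨r₁, hr₁, hsum⟩ := Metric.eventually_nhds_iff.1 (hasFPowerSeriesAt_iff.1 hp)
  obtain ⟨r₂, hr₂, hlt⟩ := ENNReal.lt_iff_exists_nnreal_btwn.1 hp.radius_pos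
  refine ⟨min r₁ r₂, lt_min hr₁ (by exact_mod_cast hr₂),
    fun z => ∑' n, (p.coeff n : ℂ) * (z - x) ^ n, ?_, fun s hs => ?_⟩
  · refine Complex.differentiableOn_tsum_of_summable_norm (p.summable_norm_mul_pow hlt)
      (fun n => by fun_prop) Metric.isOpen_ball fun n z hz => ?_
    have hz₂ : ‖z - x‖ ≤ r₂ := (mem_ball_iff_norm.1 hz).le.trans (min_le_right _ _)
    rw [norm_mul, norm_pow, Complex.norm_real, FormalMultilinearSeries.norm_apply_eq_norm_coef]
    gcongr
  · have hs₁ := Complex.hasSum_ofReal.2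
      (hsum (y := s - x) (by simpa [Real.dist_eq] using hs.trans_le (min_le_left _ _)))
    rw [add_sub_cancel] at hs₁
    rw [← hs₁.tsum_eq]
    exact tsum_congr fun n => by simp [mul_comm]

lemma exists_isHolomorphicDrift_eq_ofReal {α : ℝ → ℝ} (h : AnalyticAt ℝ α 0) (h0 : α 0 = 0) :
    ∃ (B : ℂ → ℂ) (ρ A : ℝ), IsHolomorphicDrift B ρ A ∧ ∀ s : ℝ, |s| < ρ → B s = α s := by
  obtain ⟨r, hr, f, hf, hfα⟩ := exists_differentiableOn_ball_eq_ofReal h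
  simp only [sub_zero, Complex.ofReal_zero] at hf hfα
  have hsub : Metric.closedBall (0 : ℂ) (r / 2) ⊆ Metric.ball 0 r :=
    Metric.closedBall_subset_ball (half_lt_self hr)
  obtain ⟨A, hA⟩ := (isCompact_closedBall (0 : ℂ) (r / 2)).exists_bound_of_continuousOn
    ((hf.deriv Metric.isOpen_ball).continuousOn.mono hsub)
  refine ⟨f, r / 2, A, ⟨half_pos hr, hf.mono (Metric.ball_subset_closedBall.trans hsub), ?_,
    fun w hw z hz => (convex_ball (0 : ℂ) (r / 2)).norm_image_sub_le_of_norm_deriv_le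
      (fun v hv => ?_) (fun v hv => hA v (Metric.ball_subset_closedBall hv)) hz hw,
    fun s hs => ?_⟩, fun s hs => hfα s (by linarith)⟩
  · simpa [h0] using hfα 0 (by simpa using hr)
  · exact hf.differentiableAt
      (Metric.isOpen_ball.mem_nhds (hsub (Metric.ball_subset_closedBall hv)))
  · rw [hfα s (by linarith), Complex.ofReal_im]

/-- The kernel `exp (-θ² s / 2 + θ α s)` in real time `s`. -/
noncomputable def driftKernel (α : ℝ → ℝ) (θ s : ℝ) : ℝ :=
  Real.exp (-(θ ^ 2 / 2) * s + θ * α s)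

lemma complexKernel_eq_ofReal_driftKernel {α : ℝ → ℝ} {B : ℂ → ℂ} {s : ℝ} (hB : B s = α s)
    (θ : ℝ) : complexKernel B θ s = driftKernel α θ s := by
  rw [complexKernel, driftKernel, hB]
  push_cast
  rfl

lemma norm_complexKernel_le_exp_sq_div {B : ℂ → ℂ} {w : ℂ} {M σ : ℝ} (hσ : 0 < σ)
    (hw : σ ≤ w.re) (hB : ‖B w‖ ≤ M) (θ : ℝ) :
    ‖complexKernel B θ w‖ ≤ Real.exp (M ^ 2 / (2 * σ)) := by
  rw [norm_complexKernel, Real.exp_le_exp, le_div_iff₀ (by positivity)]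
  have hre : (B w).re ^ 2 ≤ M ^ 2 := by
    rw [sq_le_sq, abs_of_nonneg ((norm_nonneg _).trans hB)]
    exact (Complex.abs_re_le_norm _).trans hB
  nlinarith [sq_nonneg (θ * σ - (B w).re), mul_le_mul_of_nonneg_left hw
    (mul_nonneg (sq_nonneg θ) hσ.le)]

section

variable {ν : Measure ℝ} [IsFiniteMeasure ν] {α : ℝ → ℝ}

lemma analyticAt_integral_driftKernel {s₀ : ℝ} (hs₀ : 0 < s₀) (h : AnalyticAt ℝ α s₀) :
    AnalyticAt ℝ (fun s => ∫ θ, driftKernel α θ s ∂ν) s₀ := by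
  obtain ⟨r, hr, f, hf, hfα⟩ := exists_differentiableOn_ball_eq_ofReal h
  have hr' : 0 < min (r / 2) (s₀ / 2) := by positivity
  have hsub : Metric.closedBall (s₀ : ℂ) (min (r / 2) (s₀ / 2)) ⊆ Metric.ball (s₀ : ℂ) r :=
    Metric.closedBall_subset_ball ((min_le_left _ _).trans_lt (half_lt_self hr))
  obtain ⟨M, hM⟩ := (isCompact_closedBall (s₀ : ℂ) _).exists_bound_of_continuousOn
    (hf.continuousOn.mono hsub)
  have hdiff := differentiableOn_integral_complexKernel (ν := ν) Metric.isOpen_ball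
    (hf.mono (Metric.ball_subset_closedBall.trans hsub)) (ae_of_all _ fun θ z hz =>
      norm_complexKernel_le_exp_sq_div (half_pos hs₀) (by
        have := (abs_le.1 ((Complex.abs_re_le_norm (z - s₀)).trans
          ((mem_ball_iff_norm.1 hz).le.trans (min_le_right _ _)))).1
        rw [Complex.sub_re, Complex.ofReal_re] at this
        linarith) (hM z (Metric.ball_subset_closedBall hz)) θ)
  refine (hdiff.analyticAt (Metric.ball_mem_nhds _ hr')).re_ofReal.congr ?_
  filter_upwards [Metric.ball_mem_nhds s₀ hr] with s hs
  simp only [complexKernel_eq_ofReal_driftKernel (hfα s hs), integral_complex_ofReal,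
    Complex.ofReal_re]

theorem integral_driftKernel_eq_one (hν : ∀ᵐ θ ∂ν, 0 ≤ θ) (h : AnalyticOnNhd ℝ α (Ici 0))
    (h0 : α 0 = 0) (hfreq : ∃ᶠ s in 𝓝[>] (0 : ℝ), ∫ θ, driftKernel α θ s ∂ν = 1) {s : ℝ}
    (hs : 0 < s) : ∫ θ, driftKernel α θ s ∂ν = 1 := by
  obtain ⟨B, ρ, A, hB, hBα⟩ := exists_isHolomorphicDrift_eq_ofReal (h 0 self_mem_Ici) h0
  have hnear : ∀ᶠ s : ℝ in 𝓝[>] 0, |s| < ρ :=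
    ((continuous_abs.tendsto' 0 0 abs_zero).mono_left nhdsWithin_le_nhds).eventually_lt_const
      hB.radius_pos
  have hone : ∀ᶠ s in 𝓝[>] (0 : ℝ), ∫ θ, driftKernel α θ s ∂ν = 1 := by
    filter_upwards [hnear, hB.integral_complexKernel_eventually_eq_one hν
      ((hfreq.and_eventually hnear).mono fun s hs => by
        simpa only [realKernel, complexKernel_eq_ofReal_driftKernel (hBα s hs.2),
          Complex.ofReal_re] using hs.1)] with s hs hs1
    simp only [complexKernel_eq_ofReal_driftKernel (hBα s hs), integral_complex_ofReal] at hs1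
    exact_mod_cast hs1
  obtain ⟨δ, hδ, hsub⟩ := mem_nhdsGT_iff_exists_Ioo_subset.1 hone
  have hδ' : (0 : ℝ) < δ := hδ
  refine AnalyticOnNhd.eqOn_of_preconnected_of_eventuallyEq (g := fun _ => (1 : ℝ))
    (fun s hs => analyticAt_integral_driftKernel hs (h s (Ioi_subset_Ici_self hs)))
    (fun s _ => analyticAt_const) isPreconnected_Ioi (half_pos hδ')
    (mem_of_superset (Ioo_mem_nhds (half_pos hδ') (half_lt_self hδ')) hsub) hs

end

/-! ### Separation of sets of continuous functions by measures -/

section Separation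

variable {X : Type*} [TopologicalSpace X] [CompactSpace X]

lemma isOpen_setOf_forall_lt_zero : IsOpen {f : C(X, ℝ) | ∀ x, f x < 0} := by
  simpa only [mapsTo_univ_iff, mem_Iio] using
    ContinuousMap.isOpen_setOfPred_mapsTo (X := X) (Y := ℝ) isCompact_univ isOpen_Iio

omit [CompactSpace X] in
lemma convex_setOf_forall_lt_zero : Convex ℝ {f : C(X, ℝ) | ∀ x, f x < 0} :=
  fun _ hf _ hg _ _ ha hb hab x =>
    convex_Iio (0 : ℝ) (mem_Iio.2 (hf x)) (mem_Iio.2 (hg x)) ha hb hab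

lemma exists_dual_nonneg_of_convex {T : Set C(X, ℝ)} (hT : Convex ℝ T) (hne : T.Nonempty)
    (hpos : ∀ f ∈ T, ∃ x, 0 ≤ f x) :
    ∃ φ : C(X, ℝ) →L[ℝ] ℝ, φ ≠ 0 ∧ (∀ f : C(X, ℝ), 0 ≤ f → 0 ≤ φ f) ∧ ∀ f ∈ T, 0 ≤ φ f := by
  have hdisj : Disjoint {f : C(X, ℝ) | ∀ x, f x < 0} T :=
    Set.disjoint_left.2 fun f hf hfT => (hpos f hfT).elim fun x hx => (hf x).not_ge hx
  obtain ⟨φ, u, hlt, hge⟩ :=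
    geometric_hahn_banach_open convex_setOf_forall_lt_zero isOpen_setOf_forall_lt_zero hT hdisj
  have hu : 0 ≤ u := by
    have hlim : Tendsto (fun r : ℝ => φ (r • (-1))) (𝓝[>] 0) (𝓝 0) := by
      have : Continuous fun r : ℝ => φ (r • (-1)) := by fun_prop
      simpa using (this.tendsto 0).mono_left nhdsWithin_le_nhds
    refine le_of_tendsto hlim ?_
    filter_upwards [self_mem_nhdsWithin] with r hr
    exact (hlt _ fun _ => by simpa using hr).le
  refine ⟨φ, ?_, fun f hf => ?_, fun f hf => hu.trans (hge f hf)⟩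
  · rintro rfl
    obtain ⟨f, hf⟩ := hne
    exact ((hlt (-1) fun _ => by simp).trans_le (hge f hf)).false
  · by_contra! hneg
    have hmem := hlt (-((|u + φ 1| / -φ f) • f) - 1) fun x => by
      have : 0 ≤ |u + φ 1| / -φ f * f x :=
        mul_nonneg (div_nonneg (abs_nonneg _) (neg_nonneg.2 hneg.le)) (hf x)
      simp only [ContinuousMap.sub_apply, ContinuousMap.neg_apply, ContinuousMap.smul_apply,
        smul_eq_mul, ContinuousMap.one_apply]
      linarith
    rw [map_sub, map_neg, map_smul, smul_eq_mul, div_neg, neg_mul, neg_neg,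
      div_mul_cancel₀ _ hneg.ne] at hmem
    linarith [le_abs_self (u + φ 1)]

variable [T2Space X] [MeasurableSpace X] [BorelSpace X]

lemma exists_isFiniteMeasure_integral_eq (φ : C(X, ℝ) →ₗ[ℝ] ℝ)
    (hφ : ∀ f : C(X, ℝ), 0 ≤ f → 0 ≤ φ f) :
    ∃ m : Measure X, IsFiniteMeasure m ∧ ∀ f : C(X, ℝ), ∫ x, f x ∂m = φ f := by
  let Λ : CompactlySupportedContinuousMap X ℝ →ₗ[ℝ] ℝ :=
    { toFun := fun f => φ f.toContinuousMap
      map_add' := fun f g => φ.map_add f.toContinuousMap g.toContinuousMap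
      map_smul' := fun r f => φ.map_smul r f.toContinuousMap }
  let Λ' := PositiveLinearMap.mk₀ Λ fun f hf => hφ _ (ContinuousMap.le_def.2 hf)
  exact ⟨RealRMK.rieszMeasure Λ', ⟨isCompact_univ.measure_lt_top⟩, fun f =>
    RealRMK.integral_rieszMeasure Λ' (CompactlySupportedContinuousMap.continuousMapEquiv f)⟩

theorem exists_isProbabilityMeasure_integral_nonneg {T : Set C(X, ℝ)} (hT : Convex ℝ T)
    (hne : T.Nonempty) (hpos : ∀ f ∈ T, ∃ x, 0 ≤ f x) :
    ∃ m : Measure X, IsProbabilityMeasure m ∧ ∀ f ∈ T, 0 ≤ ∫ x, f x ∂m := by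
  obtain ⟨φ, hφ₀, hφ, hφT⟩ := exists_dual_nonneg_of_convex hT hne hpos
  obtain ⟨m, hm, hint⟩ := exists_isFiniteMeasure_integral_eq φ.toLinearMap hφ
  have : NeZero m := ⟨by
    rintro rfl
    exact hφ₀ (ContinuousLinearMap.ext fun f => by simpa using (hint f).symm)⟩
  refine ⟨(m univ)⁻¹ • m, inferInstance, fun f hf => ?_⟩
  rw [integral_smul_measure, hint]
  exact smul_nonneg ENNReal.toReal_nonneg (hφT f hf)

end Separation

/-! ### Duality for packing and covering by measures -/

section Compactness

variable {E : Type*} [TopologicalSpace E] [MeasurableSpace E]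

lemma isClosed_setOf_lintegral_le [OpensMeasurableSpace E] {w : E → ℝ≥0} (hw : Continuous w)
    (c : ℝ≥0∞) : IsClosed {ρ : FiniteMeasure E | ∫⁻ x, w x ∂(ρ : Measure E) ≤ c} := by
  let trunc (n : ℕ) : BoundedContinuousFunction E ℝ≥0 :=
    .mkOfBound ⟨fun x => min (w x) n, by fun_prop⟩ n fun x y => by
      have hmem (z : E) : ((min (w z) n : ℝ≥0) : ℝ) ∈ Icc (0 : ℝ) n :=
        ⟨NNReal.coe_nonneg _, by exact_mod_cast min_le_right (w z) (n : ℝ≥0)⟩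
      exact (Real.dist_le_of_mem_Icc (hmem x) (hmem y)).trans_eq (sub_zero _)
  have hmono : Monotone fun (n : ℕ) x => ((trunc n x : ℝ≥0) : ℝ≥0∞) := fun i j hij x =>
    ENNReal.coe_le_coe.2 (min_le_min_left _ (Nat.cast_le.2 hij))
  have hsup (x : E) : ⨆ n, ((trunc n x : ℝ≥0) : ℝ≥0∞) = w x := by
    obtain ⟨n, hn⟩ := exists_nat_ge (w x)
    exact le_antisymm (iSup_le fun i => ENNReal.coe_le_coe.2 (min_le_left _ _))
      (le_iSup_of_le n (ENNReal.coe_le_coe.2 (le_min le_rfl hn)))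
  have hlint (ρ : FiniteMeasure E) :
      ∫⁻ x, w x ∂(ρ : Measure E) = ⨆ n, ∫⁻ x, trunc n x ∂(ρ : Measure E) := by
    rw [← lintegral_iSup (fun n => (trunc n).continuous.measurable.coe_nnreal_ennreal) hmono]
    simp only [hsup]
  simp only [hlint, iSup_le_iff, Set.ofPred_forall]
  exact isClosed_iInter fun n => isClosed_le
    (FiniteMeasure.continuous_lintegral_boundedContinuousFunction (trunc n)) continuous_const

lemma isCompact_setOf_lintegral_le [T2Space E] [BorelSpace E] {w : E → ℝ≥0} (hw : Continuous w)
    {m : ℝ≥0} (hm : m ≠ 0) (hmw : ∀ x, m ≤ w x) (hlim : Tendsto w (cocompact E) atTop) (c : ℝ≥0) :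
    IsCompact {ρ : FiniteMeasure E | ∫⁻ x, w x ∂(ρ : Measure E) ≤ c} := by
  have markov {ρ : FiniteMeasure E} (hρ : ∫⁻ x, w x ∂(ρ : Measure E) ≤ c) {a : ℝ≥0} (ha : a ≠ 0)
      {s : Set E} (hs : ∀ x ∈ s, a ≤ w x) : ρ s ≤ c / a := by
    rw [← ENNReal.coe_le_coe, FiniteMeasure.ennreal_coeFn_eq_coeFn_toMeasure, ENNReal.coe_div ha]
    calc (ρ : Measure E) s ≤ (ρ : Measure E) {x | (a : ℝ≥0∞) ≤ w x} :=
          measure_mono fun x hx => ENNReal.coe_le_coe.2 (hs x hx)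
      _ ≤ (∫⁻ x, w x ∂(ρ : Measure E)) / a :=
          meas_ge_le_lintegral_div hw.measurable.coe_nnreal_ennreal.aemeasurable
            (by simpa using ha) ENNReal.coe_ne_top
      _ ≤ c / a := by gcongr
  have hu : Tendsto (fun n : ℕ => c / (n + 1 : ℝ≥0)) atTop (𝓝 0) := by
    simpa [Function.comp_def] using
      (tendsto_const_div_atTop_nhds_zero_nat c).comp (tendsto_add_atTop_nat 1)
  have hK (n : ℕ) : IsCompact {x | w x ≤ n + 1} := by
    obtain ⟨K, hK, hKw⟩ := mem_cocompact.1 (hlim.eventually_gt_atTop ((n : ℝ≥0) + 1))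
    exact hK.of_isClosed_subset (isClosed_le hw continuous_const)
      fun x (hx : w x ≤ n + 1) => by_contra fun hxK => hx.not_gt (hKw hxK)
  refine (isCompact_setOfPred_finiteMeasure_mass_le_compl_isCompact_le (c / m) hu hK
    (.inr fun i j hij x (hx : w x ≤ i + 1) => hx.trans (by gcongr))).of_isClosed_subset
      (isClosed_setOf_lintegral_le hw c) fun ρ hρ => ⟨markov hρ hm fun x _ => hmw x, fun n => ?_⟩
  exact markov hρ n.cast_add_one_ne_zero fun x hx => le_of_not_ge (α := ℝ≥0) hx

end Compactness

lemma lintegral_ofReal_withDensity {E : Type*} [MeasurableSpace E] (μ : Measure E) {h f : E → ℝ}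
    (hh : Measurable h) (h0 : ∀ x, 0 ≤ h x) (hf : Measurable f) :
    ∫⁻ x, ENNReal.ofReal (f x) ∂(μ.withDensity fun x => ENNReal.ofReal (h x)) =
      ∫⁻ x, ENNReal.ofReal (h x * f x) ∂μ := by
  rw [lintegral_withDensity_eq_lintegral_mul _ hh.ennreal_ofReal hf.ennreal_ofReal]
  simp only [Pi.mul_apply, ENNReal.ofReal_mul (h0 _)]

lemma integral_withDensity_ofReal {E : Type*} [MeasurableSpace E] (μ : Measure E) {h : E → ℝ}
    (hh : Measurable h) (h0 : ∀ x, 0 ≤ h x) (f : E → ℝ) :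
    ∫ x, f x ∂(μ.withDensity fun x => ENNReal.ofReal (h x)) = ∫ x, h x * f x ∂μ := by
  rw [integral_withDensity_eq_integral_toReal_smul hh.ennreal_ofReal
    (ae_of_all _ fun _ => ENNReal.ofReal_lt_top)]
  simp only [ENNReal.toReal_ofReal (h0 _), smul_eq_mul]

section Duality

variable {Θ X : Type*} [TopologicalSpace Θ] [TopologicalSpace X]

/-- A positive continuous kernel on `Θ × X` bounded above by `K`. -/
structure IsBoundedKernel (k : Θ → X → ℝ) (K : ℝ) : Prop where
  continuous : Continuous (Function.uncurry k)
  pos : ∀ θ x, 0 < k θ x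
  le : ∀ θ x, k θ x ≤ K

/-- A finite measure on `Θ` whose potential with respect to the kernel `k` is at most one. -/
def IsPacking {Θ X : Type*} [MeasurableSpace Θ] (k : Θ → X → ℝ) (ν : Measure Θ) : Prop :=
  IsFiniteMeasure ν ∧ ∀ x, ∫ θ, k θ x ∂ν ≤ 1

/-- A finite measure on `X` whose potential with respect to the kernel `k` dominates `g`. -/
def IsCovering {Θ X : Type*} [MeasurableSpace X] (k : Θ → X → ℝ) (g : Θ → ℝ)
    (lam : Measure X) : Prop :=
  IsFiniteMeasure lam ∧ ∀ θ, g θ ≤ ∫ x, k θ x ∂lam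

namespace IsBoundedKernel

variable {k : Θ → X → ℝ} {K : ℝ} {g h : Θ → ℝ}

lemma continuous_left (hk : IsBoundedKernel k K) (x : X) : Continuous fun θ => k θ x :=
  hk.continuous.comp (by fun_prop : Continuous fun θ : Θ => (θ, x))

lemma continuous_right (hk : IsBoundedKernel k K) (θ : Θ) : Continuous (k θ) :=
  hk.continuous.comp (by fun_prop : Continuous fun x : X => (θ, x))

lemma restrict_left (hk : IsBoundedKernel k K) (s : Set Θ) :
    IsBoundedKernel (fun (θ : s) x => k θ x) K where
  continuous := hk.continuous.comp (by fun_prop : Continuous fun p : s × X => ((p.1 : Θ), p.2))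
  pos θ := hk.pos θ
  le θ := hk.le θ

lemma norm_le (hk : IsBoundedKernel k K) (θ : Θ) (x : X) : ‖k θ x‖ ≤ K :=
  (Real.norm_of_nonneg (hk.pos θ x).le).trans_le (hk.le θ x)

lemma integrable_left [MeasurableSpace Θ] [BorelSpace Θ] (hk : IsBoundedKernel k K)
    (ν : Measure Θ) [IsFiniteMeasure ν] (x : X) :
    Integrable (fun θ => k θ x) ν :=
  .of_bound (hk.continuous_left x).measurable.aestronglyMeasurable K
    (ae_of_all _ fun θ => hk.norm_le θ x)

lemma integrable_right [MeasurableSpace X] [BorelSpace X] (hk : IsBoundedKernel k K)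
    (lam : Measure X) [IsFiniteMeasure lam] (θ : Θ) :
    Integrable (k θ) lam :=
  .of_bound (hk.continuous_right θ).measurable.aestronglyMeasurable K (ae_of_all _ (hk.norm_le θ))

lemma integrable_prod [MeasurableSpace Θ] [BorelSpace Θ] [MeasurableSpace X] [BorelSpace X]
    [SecondCountableTopology X] (hk : IsBoundedKernel k K) (ν : Measure Θ) [IsFiniteMeasure ν]
    (lam : Measure X) [IsFiniteMeasure lam] :
    Integrable (Function.uncurry k) (ν.prod lam) :=
  .of_bound hk.continuous.measurable.aestronglyMeasurable K
    (ae_of_all _ fun p => hk.norm_le p.1 p.2)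

lemma continuous_integral [MeasurableSpace Θ] [BorelSpace Θ]
    [FirstCountableTopology X] (hk : IsBoundedKernel k K) (ν : Measure Θ) [IsFiniteMeasure ν] :
    Continuous fun x => ∫ θ, k θ x ∂ν :=
  continuous_of_dominated
    (fun x => (hk.continuous_left x).measurable.aestronglyMeasurable)
    (fun x => ae_of_all _ fun θ => hk.norm_le θ x) (integrable_const K)
    (ae_of_all _ hk.continuous_right)

lemma isPacking_iff [MeasurableSpace Θ] [BorelSpace Θ] (hk : IsBoundedKernel k K)
    (ν : Measure Θ) [IsFiniteMeasure ν] :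
    IsPacking k ν ↔ ∀ x, ∫⁻ θ, ENNReal.ofReal (k θ x) ∂ν ≤ 1 := by
  refine (and_iff_right ‹_›).trans (forall_congr' fun x => ?_)
  rw [← ofReal_integral_eq_lintegral_ofReal (hk.integrable_left ν x)
    (ae_of_all _ fun θ => (hk.pos θ x).le), ENNReal.ofReal_le_one]

/-- Weighting measures by `1 / h` makes packings weakly compact: the constraint at `xs` bounds the
mass near infinity. -/
lemma isCompact_setOf_weighted_packing [T2Space Θ] [MeasurableSpace Θ] [BorelSpace Θ]
    (hk : IsBoundedKernel k K) (hh : Continuous h) (hpos : ∀ θ, 0 < h θ)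
    (hlim : Tendsto h (cocompact Θ) (𝓝 0)) {H m : ℝ} (hH : ∀ θ, h θ ≤ H) (hm : 0 < m) {xs : X}
    (hxs : ∀ θ, m ≤ k θ xs) [Nonempty Θ] :
    IsCompact {ρ : FiniteMeasure Θ |
      ∀ x, ∫⁻ θ, ENNReal.ofReal (k θ x / h θ) ∂(ρ : Measure Θ) ≤ 1} := by
  have hcont (x : X) : Continuous fun θ => (k θ x / h θ).toNNReal :=
    continuous_real_toNNReal.comp ((hk.continuous_left x).div hh fun θ => (hpos θ).ne')
  have hcoercive : Tendsto (fun θ => (k θ xs / h θ).toNNReal) (cocompact Θ) atTop := by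
    have : Tendsto (fun θ => m * (h θ)⁻¹) (cocompact Θ) atTop :=
      (tendsto_inv_nhdsGT_zero.comp (tendsto_nhdsWithin_iff.2
        ⟨hlim, Eventually.of_forall hpos⟩)).const_mul_atTop hm
    exact tendsto_real_toNNReal_atTop.comp (tendsto_atTop_mono
      (fun θ => mul_le_mul_of_nonneg_right (hxs θ) (inv_nonneg.2 (hpos θ).le)) this)
  have hlower (θ : Θ) : (m / H).toNNReal ≤ (k θ xs / h θ).toNNReal :=
    Real.toNNReal_le_toNNReal (div_le_div₀ (hk.pos θ xs).le (hxs θ) (hpos θ) (hH θ))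
  have hclosed : IsClosed {ρ : FiniteMeasure Θ |
      ∀ x, ∫⁻ θ, ENNReal.ofReal (k θ x / h θ) ∂(ρ : Measure Θ) ≤ 1} := by
    rw [Set.ofPred_forall]
    exact isClosed_iInter fun x => isClosed_setOf_lintegral_le (hcont x) 1
  have hmH : 0 < m / H := div_pos hm ((hpos _).trans_le (hH (Classical.arbitrary Θ)))
  exact (isCompact_setOf_lintegral_le (hcont xs) (Real.toNNReal_pos.2 hmH).ne' hlower hcoercive
    1).of_isClosed_subset hclosed fun ρ hρ => hρ xs

lemma isPacking_withDensity_inv [MeasurableSpace Θ] [BorelSpace Θ] (hk : IsBoundedKernel k K)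
    (hh : Measurable h) (hpos : ∀ θ, 0 < h θ) {m : ℝ} (hm : 0 < m) {xs : X} (hxs : ∀ θ, m ≤ k θ xs)
    {ρ : Measure Θ} (hρ : ∀ x, ∫⁻ θ, ENNReal.ofReal (k θ x / h θ) ∂ρ ≤ 1) :
    IsPacking k (ρ.withDensity fun θ => ENNReal.ofReal (h θ)⁻¹) := by
  set ν := ρ.withDensity fun θ => ENNReal.ofReal (h θ)⁻¹ with hν
  have hle (x : X) : ∫⁻ θ, ENNReal.ofReal (k θ x) ∂ν ≤ 1 := by
    rw [hν, lintegral_ofReal_withDensity ρ (h := fun θ => (h θ)⁻¹) hh.inv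
      (fun θ => inv_nonneg.2 (hpos θ).le) (hk.continuous_left x).measurable]
    simpa only [div_eq_inv_mul] using hρ x
  have hmass : ENNReal.ofReal m * ν univ ≤ 1 := by
    rw [← lintegral_const]
    exact (lintegral_mono fun θ => ENNReal.ofReal_le_ofReal (hxs θ)).trans (hle xs)
  have : IsFiniteMeasure ν := ⟨lt_top_iff_ne_top.2 fun htop => by
    rw [htop, ENNReal.mul_top (ENNReal.ofReal_pos.2 hm).ne'] at hmass
    exact absurd hmass (by simp)⟩
  exact (hk.isPacking_iff ν).2 hle

lemma lintegral_div_withDensity_le_one [MeasurableSpace Θ] [BorelSpace Θ]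
    (hk : IsBoundedKernel k K) (hh : Measurable h) (hpos : ∀ θ, 0 < h θ) {ν : Measure Θ}
    (hν : IsPacking k ν) (x : X) :
    ∫⁻ θ, ENNReal.ofReal (k θ x / h θ) ∂(ν.withDensity fun θ => ENNReal.ofReal (h θ)) ≤ 1 := by
  have := hν.1
  rw [lintegral_ofReal_withDensity ν (f := fun θ => k θ x / h θ) hh (fun θ => (hpos θ).le)
    ((hk.continuous_left x).measurable.div hh)]
  simpa only [mul_div_cancel₀ _ (hpos _).ne'] using (hk.isPacking_iff ν).1 hν x

theorem exists_isPacking_forall_integral_le [T2Space Θ] [MeasurableSpace Θ] [BorelSpace Θ]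
    (hk : IsBoundedKernel k K) (hg : Continuous g) (hpos : ∀ θ, 0 < g θ)
    (hlim : Tendsto g (cocompact Θ) (𝓝 0)) {m : ℝ} (hm : 0 < m) {xs : X} (hxs : ∀ θ, m ≤ k θ xs)
    [Nonempty Θ] :
    ∃ ν, IsPacking k ν ∧ ∀ ν', IsPacking k ν' → ∫ θ, g θ ∂ν' ≤ ∫ θ, g θ ∂ν := by
  let γ : ZeroAtInftyContinuousMap Θ ℝ := ⟨⟨fun θ => √(g θ), by fun_prop⟩, by
    simpa [Function.comp_def] using (Real.continuous_sqrt.tendsto 0).comp hlim⟩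
  have hγ (θ : Θ) : 0 < γ θ := Real.sqrt_pos.2 (hpos θ)
  have hγγ (θ : Θ) : γ θ * γ θ = g θ := Real.mul_self_sqrt (hpos θ).le
  have hγm : Measurable γ := (map_continuous γ).measurable
  have hcompact := hk.isCompact_setOf_weighted_packing (map_continuous γ) hγ γ.zero_at_infty'
    (fun θ => (le_abs_self _).trans (γ.toBCF.norm_coe_le_norm θ)) hm hxs
  obtain ⟨ρ, hρ, hmax⟩ := hcompact.exists_isMaxOn ⟨0, by simp⟩
    (FiniteMeasure.continuous_integral_boundedContinuousFunction γ.toBCF).continuousOn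
  refine ⟨_, hk.isPacking_withDensity_inv hγm hγ hm hxs hρ, fun ν hν => ?_⟩
  have := hν.1
  have hfin : IsFiniteMeasure (ν.withDensity fun θ => ENNReal.ofReal (γ θ)) :=
    isFiniteMeasure_withDensity_ofReal (γ.toBCF.integrable ν).2
  have hle : ∫ θ, γ θ ∂(ν.withDensity fun θ => ENNReal.ofReal (γ θ)) ≤ ∫ θ, γ θ ∂(ρ : Measure Θ) :=
    hmax (a := ⟨_, hfin⟩)
      (hk.lintegral_div_withDensity_le_one hγm hγ hν)
  rw [integral_withDensity_ofReal _ hγm fun θ => (hγ θ).le] at hle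
  rw [integral_withDensity_ofReal _ (h := fun θ => (γ θ)⁻¹) hγm.inv fun θ => inv_nonneg.2 (hγ θ).le]
  simpa only [← hγγ, inv_mul_cancel_left₀ (hγ _).ne'] using hle

section

variable [MeasurableSpace Θ] [BorelSpace Θ]

/-- If every constraint were slack, `ν` could be scaled up. -/
lemma exists_one_le_integral [CompactSpace X] [FirstCountableTopology X] [Nonempty X]
    (hk : IsBoundedKernel k K) {ν : Measure Θ}
    (hmax : ∀ ν', IsPacking k ν' → ∫ θ, g θ ∂ν' ≤ ∫ θ, g θ ∂ν)
    (hd : 0 < ∫ θ, g θ ∂ν) {ν' : Measure Θ} [IsFiniteMeasure ν']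
    (heq : ∫ θ, g θ ∂ν' = ∫ θ, g θ ∂ν) : ∃ x, 1 ≤ ∫ θ, k θ x ∂ν' := by
  obtain ⟨x, -, hx⟩ := isCompact_univ.exists_isMaxOn univ_nonempty
    (hk.continuous_integral ν').continuousOn
  refine ⟨x, ?_⟩
  by_contra! hlt
  set r : ℝ := max (∫ θ, k θ x ∂ν') (1 / 2)
  have hr0 : 0 < r := lt_max_of_lt_right one_half_pos
  have hr1 : r < 1 := max_lt hlt one_half_lt_one
  have hpack : IsPacking k (ENNReal.ofReal r⁻¹ • ν') := by
    refine ⟨ν'.smul_finite ENNReal.ofReal_ne_top, fun y => ?_⟩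
    rw [integral_smul_measure, ENNReal.toReal_ofReal (inv_nonneg.2 hr0.le), smul_eq_mul,
      inv_mul_le_one₀ hr0]
    exact (hx (mem_univ y)).trans (le_max_left _ _)
  have hle := hmax _ hpack
  rw [integral_smul_measure, ENNReal.toReal_ofReal (inv_nonneg.2 hr0.le), smul_eq_mul, heq,
    inv_mul_le_iff₀ hr0] at hle
  nlinarith

lemma convex_setOf_potential_sub_one (hk : IsBoundedKernel k K) (hg : Measurable g) {G : ℝ}
    (hG : ∀ θ, ‖g θ‖ ≤ G) (d : ℝ) :
    Convex ℝ {f : C(X, ℝ) | ∃ ν : Measure Θ, IsFiniteMeasure ν ∧ ∫ θ, g θ ∂ν = d ∧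
      ∀ x, f x = ∫ θ, k θ x ∂ν - 1} := by
  rintro f ⟨ν₁, _, hg₁, hf₁⟩ f' ⟨ν₂, _, hg₂, hf₂⟩ a b ha hb hab
  have hfin₁ : IsFiniteMeasure (ENNReal.ofReal a • ν₁) := ν₁.smul_finite ENNReal.ofReal_ne_top
  have hfin₂ : IsFiniteMeasure (ENNReal.ofReal b • ν₂) := ν₂.smul_finite ENNReal.ofReal_ne_top
  have hadd {u : Θ → ℝ} {C : ℝ} (hu : Measurable u) (hC : ∀ θ, ‖u θ‖ ≤ C) :
      ∫ θ, u θ ∂(ENNReal.ofReal a • ν₁ + ENNReal.ofReal b • ν₂) =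
        a * ∫ θ, u θ ∂ν₁ + b * ∫ θ, u θ ∂ν₂ := by
    rw [integral_add_measure (.of_bound hu.aestronglyMeasurable C (ae_of_all _ hC))
      (.of_bound hu.aestronglyMeasurable C (ae_of_all _ hC)), integral_smul_measure,
      integral_smul_measure, ENNReal.toReal_ofReal ha, ENNReal.toReal_ofReal hb, smul_eq_mul,
      smul_eq_mul]
  refine ⟨_, inferInstance, (hadd hg hG).trans ?_, fun x => ?_⟩
  · rw [hg₁, hg₂, ← add_mul, hab, one_mul]
  · rw [hadd (hk.continuous_left x).measurable fun θ => hk.norm_le θ x]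
    simp only [ContinuousMap.add_apply, ContinuousMap.smul_apply, smul_eq_mul, hf₁, hf₂]
    linear_combination -hab

lemma integral_pos_of_forall_isPacking_le [Nonempty Θ] [Nonempty X] (hk : IsBoundedKernel k K)
    (hg : Measurable g) (hpos : ∀ θ, 0 < g θ) {ν : Measure Θ}
    (hmax : ∀ ν', IsPacking k ν' → ∫ θ, g θ ∂ν' ≤ ∫ θ, g θ ∂ν) : 0 < ∫ θ, g θ ∂ν := by
  have θ := Classical.arbitrary Θ
  have hK : 0 < K := (hk.pos θ (Classical.arbitrary X)).trans_le (hk.le _ _)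
  have hpack : IsPacking k (ENNReal.ofReal K⁻¹ • Measure.dirac θ) := by
    refine ⟨Measure.smul_finite _ ENNReal.ofReal_ne_top, fun x => ?_⟩
    rw [integral_smul_measure, ENNReal.toReal_ofReal (inv_nonneg.2 hK.le), smul_eq_mul,
      integral_dirac' _ _ (hk.continuous_left x).measurable.stronglyMeasurable, inv_mul_le_one₀ hK]
    exact hk.le θ x
  refine lt_of_lt_of_le ?_ (hmax _ hpack)
  rw [integral_smul_measure, ENNReal.toReal_ofReal (inv_nonneg.2 hK.le), smul_eq_mul,
    integral_dirac' _ _ hg.stronglyMeasurable]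
  exact mul_pos (inv_pos.2 hK) (hpos θ)

variable [MeasurableSpace X] [BorelSpace X]

theorem exists_isCovering [CompactSpace X] [T2Space X] [FirstCountableTopology X] [Nonempty X]
    (hk : IsBoundedKernel k K) (hg : Measurable g) (hpos : ∀ θ, 0 < g θ) {G : ℝ}
    (hG : ∀ θ, ‖g θ‖ ≤ G) {ν : Measure Θ} [IsFiniteMeasure ν]
    (hd : 0 < ∫ θ, g θ ∂ν) (hmax : ∀ ν', IsPacking k ν' → ∫ θ, g θ ∂ν' ≤ ∫ θ, g θ ∂ν) :
    ∃ lam : Measure X, IsCovering k g lam ∧ lam.real univ = ∫ θ, g θ ∂ν := by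
  obtain ⟨m, hm, hint⟩ := exists_isProbabilityMeasure_integral_nonneg
    (hk.convex_setOf_potential_sub_one hg hG (∫ θ, g θ ∂ν))
    ⟨⟨fun x => ∫ θ, k θ x ∂ν - 1, (hk.continuous_integral ν).sub continuous_const⟩, ν, ‹_›, rfl,
      fun x => rfl⟩
    fun f ⟨ν', _, heq, hf⟩ => (hk.exists_one_le_integral hmax hd heq).imp fun x hx => by
      rw [hf]; exact sub_nonneg.2 hx
  refine ⟨ENNReal.ofReal (∫ θ, g θ ∂ν) • m, ⟨m.smul_finite ENNReal.ofReal_ne_top, fun θ => ?_⟩, ?_⟩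
  · set r : ℝ := (∫ θ, g θ ∂ν) / g θ with hr
    have hr0 : 0 ≤ r := (div_pos hd (hpos θ)).le
    have htest : 0 ≤ ∫ x, (r * k θ x - 1) ∂m := by
      refine hint ⟨fun x => r * k θ x - 1, ((hk.continuous_right θ).const_mul r).sub
        continuous_const⟩ ⟨ENNReal.ofReal r • .dirac θ, Measure.smul_finite _ ENNReal.ofReal_ne_top,
        ?_, fun x => ?_⟩
      · rw [integral_smul_measure, ENNReal.toReal_ofReal hr0,
          integral_dirac' _ _ hg.stronglyMeasurable, smul_eq_mul, hr,
          div_mul_cancel₀ _ (hpos θ).ne']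
      · rw [integral_smul_measure, ENNReal.toReal_ofReal hr0,
          integral_dirac' _ _ (hk.continuous_left x).measurable.stronglyMeasurable]
        rfl
    rw [integral_sub ((hk.integrable_right m θ).const_mul r) (integrable_const _),
      integral_const_mul, integral_const, probReal_univ, one_smul, sub_nonneg, hr,
      div_mul_eq_mul_div, one_le_div (hpos θ)] at htest
    rwa [integral_smul_measure, ENNReal.toReal_ofReal hd.le]
  · simp [hd.le]

lemma ae_eq_of_integral_eq [SecondCountableTopology X] (hk : IsBoundedKernel k K)
    {ν : Measure Θ} {lam : Measure X} (hν : IsPacking k ν) (hlam : IsCovering k g lam)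
    (hg : Integrable g ν) (heq : lam.real univ = ∫ θ, g θ ∂ν) :
    (∀ᵐ θ ∂ν, ∫ x, k θ x ∂lam = g θ) ∧ ∀ᵐ x ∂lam, ∫ θ, k θ x ∂ν = 1 := by
  have := hν.1
  have := hlam.1
  have hprod := hk.integrable_prod ν lam
  have hint₁ : Integrable (fun θ => ∫ x, k θ x ∂lam) ν := hprod.integral_prod_left
  have hint₂ : Integrable (fun x => ∫ θ, k θ x ∂ν) lam := hprod.integral_prod_right
  have hle₁ : ∫ θ, g θ ∂ν ≤ ∫ θ, ∫ x, k θ x ∂lam ∂ν :=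
    integral_mono hg hint₁ hlam.2
  have hle₂ : ∫ x, ∫ θ, k θ x ∂ν ∂lam ≤ ∫ _, (1 : ℝ) ∂lam :=
    integral_mono hint₂ (integrable_const _) hν.2
  have hswap : ∫ θ, ∫ x, k θ x ∂lam ∂ν = ∫ x, ∫ θ, k θ x ∂ν ∂lam := integral_integral_swap hprod
  have hone : ∫ _, (1 : ℝ) ∂lam = lam.real univ := by simp
  constructor
  · filter_upwards [(integral_eq_iff_of_ae_le hg hint₁ (ae_of_all _ hlam.2)).1
      (by linarith)] with θ hθ using hθ.symm
  · exact (integral_eq_iff_of_ae_le hint₂ (integrable_const _)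
      (ae_of_all _ hν.2)).1 (by linarith)

theorem exists_isPacking_isCovering [T2Space Θ] [CompactSpace X] [T2Space X]
    [FirstCountableTopology X] [Nonempty Θ] (hk : IsBoundedKernel k K) (hg : Continuous g)
    (hpos : ∀ θ, 0 < g θ) (hlim : Tendsto g (cocompact Θ) (𝓝 0)) {m : ℝ} (hm : 0 < m) {xs : X}
    (hxs : ∀ θ, m ≤ k θ xs) :
    ∃ ν lam, IsPacking k ν ∧ IsCovering k g lam ∧ lam.real univ = ∫ θ, g θ ∂ν := by
  have : Nonempty X := ⟨xs⟩
  let γ : ZeroAtInftyContinuousMap Θ ℝ := ⟨⟨g, hg⟩, hlim⟩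
  obtain ⟨ν, hν, hmax⟩ := hk.exists_isPacking_forall_integral_le hg hpos hlim hm hxs
  have := hν.1
  obtain ⟨lam, hlam, heq⟩ := hk.exists_isCovering hg.measurable hpos γ.toBCF.norm_coe_le_norm
    (hk.integral_pos_of_forall_isPacking_le hg.measurable hpos hmax) hmax
  exact ⟨ν, lam, hν, hlam, heq⟩

end

end IsBoundedKernel

end Duality

/-! ### Bounded support of optimal packings -/

lemma exists_abs_le_mul_of_analyticOnNhd {α : ℝ → ℝ} (h : AnalyticOnNhd ℝ α (Ici 0))
    (h0 : α 0 = 0) (S : ℝ) : ∃ A, 0 ≤ A ∧ ∀ s ∈ Icc 0 S, |α s| ≤ A * s := by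
  have hsub : Icc 0 S ⊆ Ici (0 : ℝ) := fun s hs => hs.1
  obtain ⟨C, hC⟩ :=
    isCompact_Icc.exists_bound_of_continuousOn (h.deriv.continuousOn.mono hsub)
  refine ⟨max C 0, le_max_right _ _, fun s hs => ?_⟩
  have hle := (convex_Icc 0 S).norm_image_sub_le_of_norm_deriv_le
    (fun x hx => (h x (hsub hx)).differentiableAt) hC ⟨le_rfl, hs.1.trans hs.2⟩ hs
  rw [h0, sub_zero, sub_zero, Real.norm_eq_abs, Real.norm_of_nonneg hs.1] at hle
  exact hle.trans (mul_le_mul_of_nonneg_right (le_max_left _ _) hs.1)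

section

variable {α : ℝ → ℝ} {A S c : ℝ}

lemma driftKernel_pos (α : ℝ → ℝ) (θ s : ℝ) : 0 < driftKernel α θ s :=
  Real.exp_pos _

lemma driftKernel_zero (h0 : α 0 = 0) (θ : ℝ) : driftKernel α θ 0 = 1 := by
  simp [driftKernel, h0]

lemma driftKernel_le_exp {s : ℝ} (hs : s ∈ Icc 0 S) (hα : |α s| ≤ A * s) (θ : ℝ) :
    driftKernel α θ s ≤ Real.exp (A ^ 2 * S / 2) := by
  refine Real.exp_le_exp.2 ?_
  have hdrift : θ * α s ≤ |θ| * (A * s) := (le_abs_self _).trans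
    ((abs_mul θ (α s)).trans_le (mul_le_mul_of_nonneg_left hα (abs_nonneg θ)))
  rw [← sq_abs θ]
  linarith [mul_le_mul_of_nonneg_left hs.2 (sq_nonneg A), mul_nonneg (sq_nonneg (|θ| - A)) hs.1]

lemma continuous_uncurry_driftKernel (h : ContinuousOn α (Ici 0)) :
    Continuous (Function.uncurry fun (θ : ℝ) (s : Icc 0 S) => driftKernel α θ s) := by
  have hα : Continuous fun s : Icc 0 S => α s :=
    h.comp_continuous continuous_subtype_val fun s => s.2.1
  have hquad : Continuous fun p : ℝ × Icc 0 S => -(p.1 ^ 2 / 2) * (p.2 : ℝ) := by fun_prop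
  exact Real.continuous_exp.comp (hquad.add (continuous_fst.mul (hα.comp continuous_snd)))

lemma isBoundedKernel_driftKernel (h : ContinuousOn α (Ici 0))
    (hα : ∀ s ∈ Icc 0 S, |α s| ≤ A * s) :
    IsBoundedKernel (fun (θ : ℝ) (s : Icc 0 S) => driftKernel α θ s)
      (Real.exp (A ^ 2 * S / 2)) where
  continuous := continuous_uncurry_driftKernel h
  pos θ s := driftKernel_pos α θ s
  le θ s := driftKernel_le_exp s.2 (hα s s.2) θ

variable {lam : Measure (Icc 0 S)} [IsFiniteMeasure lam]

lemma tendsto_exp_neg_sq_mul_add {σ : ℝ} (hσ : 0 < σ) (β : ℝ) :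
    Tendsto (fun θ : ℝ => Real.exp (-(θ ^ 2 / 2) * σ + θ * β)) atTop (𝓝 0) := by
  refine Real.tendsto_exp_atBot.comp ?_
  have hfactor (θ : ℝ) : -(θ ^ 2 / 2) * σ + θ * β = θ * (-(σ / 2) * θ + β) := by ring
  simp only [hfactor]
  exact tendsto_id.atTop_mul_atBot₀ (tendsto_atBot_add_const_right _ _
    (tendsto_id.const_mul_atTop_of_neg (by linarith)))

lemma integral_driftKernel_le_of_ae_le (h : ContinuousOn α (Ici 0)) (hA : 0 ≤ A)
    (hα : ∀ s ∈ Icc 0 S, |α s| ≤ A * s) {η : ℝ} (hη : ∀ᵐ s : Icc 0 S ∂lam, η ≤ s) {θ : ℝ}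
    (hθ : 0 ≤ θ) :
    ∫ s, driftKernel α θ s ∂lam
      ≤ lam.real univ * Real.exp (-(θ ^ 2 / 2) * η + θ * (A * S)) := by
  rw [← smul_eq_mul, ← integral_const]
  refine integral_mono_ae ((isBoundedKernel_driftKernel h hα).integrable_right lam θ)
    (integrable_const _) (hη.mono fun s hs => Real.exp_le_exp.2 (add_le_add ?_ ?_))
  · exact mul_le_mul_of_nonpos_left hs (neg_nonpos.2 (by positivity))
  · exact mul_le_mul_of_nonneg_left ((le_abs_self _).trans ((hα s s.2).trans
      (mul_le_mul_of_nonneg_left s.2.2 hA))) hθ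

/-- A measure charging only times `s ≥ η` has Gaussian potential, which is eventually below any
exponential. -/
lemma measureReal_zero_pos_of_exp_le_integral (h : ContinuousOn α (Ici 0)) (hA : 0 ≤ A)
    (hα : ∀ s ∈ Icc 0 S, |α s| ≤ A * s) {η : ℝ} (hη : 0 < η)
    (hsupp : ∀ᵐ s : Icc 0 S ∂lam, (s : ℝ) = 0 ∨ η ≤ s)
    (hcover : ∀ᶠ θ : ℝ in atTop, Real.exp (-(c * θ)) ≤ ∫ s, driftKernel α θ s ∂lam) :
    0 < lam.real {s | (s : ℝ) = 0} := by
  refine measureReal_nonneg.lt_of_ne' fun hzero => ?_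
  have hne : ∀ᵐ s : Icc 0 S ∂lam, (s : ℝ) ≠ 0 :=
    measure_eq_zero_iff_ae_notMem.1 ((measureReal_eq_zero_iff).1 hzero)
  have hfar : ∀ᵐ s : Icc 0 S ∂lam, η ≤ s :=
    (hsupp.and hne).mono fun s hs => hs.1.resolve_left hs.2
  have hsmall := (tendsto_exp_neg_sq_mul_add hη (A * S + c)).const_mul (lam.real univ)
  rw [mul_zero] at hsmall
  obtain ⟨θ, ⟨hlt, hθ⟩, hle⟩ :=
    (((hsmall.eventually_lt_const one_pos).and (eventually_ge_atTop 0)).and hcover).exists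
  have hcalc : Real.exp (-(c * θ)) * Real.exp (c * θ)
      ≤ lam.real univ * Real.exp (-(θ ^ 2 / 2) * η + θ * (A * S)) * Real.exp (c * θ) :=
    mul_le_mul_of_nonneg_right (hle.trans (integral_driftKernel_le_of_ae_le h hA hα hfar hθ))
      (Real.exp_pos _).le
  rw [mul_assoc, ← Real.exp_add, ← Real.exp_add, neg_add_cancel, Real.exp_zero] at hcalc
  refine hcalc.not_gt (hlt.trans_eq' ?_)
  ring_nf

lemma eventually_exp_lt_integral_driftKernel (h : ContinuousOn α (Ici 0)) (h0 : α 0 = 0)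
    (hα : ∀ s ∈ Icc 0 S, |α s| ≤ A * s) (hc : 0 < c) (hatom : 0 < lam.real {s | (s : ℝ) = 0}) :
    ∀ᶠ θ : ℝ in atTop, Real.exp (-(c * θ)) < ∫ s, driftKernel α θ s ∂lam := by
  have hmeas : MeasurableSet {s : Icc 0 S | (s : ℝ) = 0} :=
    measurable_subtype_coe (measurableSet_singleton 0)
  have hatom_le (θ : ℝ) : lam.real {s | (s : ℝ) = 0} ≤ ∫ s, driftKernel α θ s ∂lam := by
    have hone : ∫ s in {s : Icc 0 S | (s : ℝ) = 0}, driftKernel α θ s ∂lam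
        = lam.real {s | (s : ℝ) = 0} := by
      rw [setIntegral_congr_fun (g := fun _ => (1 : ℝ)) hmeas fun s hs => by
        rw [mem_ofPred_eq] at hs
        simp only [hs, driftKernel_zero h0]]
      simp
    exact hone.symm.trans_le (setIntegral_le_integral
      ((isBoundedKernel_driftKernel h hα).integrable_right lam θ)
      (ae_of_all _ fun s => (driftKernel_pos α θ s).le))
  have hlim : Tendsto (fun θ : ℝ => Real.exp (-(c * θ))) atTop (𝓝 0) :=
    Real.tendsto_exp_neg_atTop_nhds_zero.comp (tendsto_id.const_mul_atTop hc)
  exact (hlim.eventually_lt_const hatom).mono fun θ hθ => hθ.trans_le (hatom_le θ)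

end

section

variable {α : ℝ → ℝ} {A S c : ℝ} {lam : Measure (Icc 0 S)}

lemma norm_cexp_sq_mul_add_mul_le {s β r : ℝ} {z : ℂ} (hs : s ∈ Icc 0 S) (hβ : |β| ≤ A * s)
    (hA : 0 ≤ A) (hz : ‖z‖ ≤ r) :
    ‖Complex.exp (-(z ^ 2 / 2) * s + z * β)‖ ≤ Real.exp (r ^ 2 / 2 * S + r * (A * S)) := by
  rw [Complex.norm_exp, Real.exp_le_exp]
  refine (Complex.re_le_norm _).trans ((norm_add_le _ _).trans ?_)
  simp only [norm_mul, norm_neg, norm_div, norm_pow, Complex.norm_real, Complex.norm_ofNat,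
    Real.norm_of_nonneg hs.1, Real.norm_eq_abs]
  have hr : 0 ≤ r := (norm_nonneg z).trans hz
  have hS : s ≤ S := hs.2
  have hs0 : 0 ≤ s := hs.1
  have hβS : |β| ≤ A * S := hβ.trans (mul_le_mul_of_nonneg_left hS hA)
  gcongr

lemma differentiable_integral_cexp [IsFiniteMeasure lam] (h : ContinuousOn α (Ici 0)) (hA : 0 ≤ A)
    (hα : ∀ s ∈ Icc 0 S, |α s| ≤ A * s) :
    Differentiable ℂ fun z : ℂ => ∫ s : Icc 0 S, Complex.exp (-(z ^ 2 / 2) * s + z * α s) ∂lam := by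
  have hcont : Continuous fun s : Icc 0 S => (α s : ℂ) := Complex.continuous_ofReal.comp
    (h.comp_continuous continuous_subtype_val fun s => s.2.1)
  have hderiv (s : Icc 0 S) (z : ℂ) :
      deriv (fun z : ℂ => Complex.exp (-(z ^ 2 / 2) * s + z * α s)) z
        = Complex.exp (-(z ^ 2 / 2) * s + z * α s) * (-z * s + α s) := by
    have hquad : HasDerivAt (fun z : ℂ => -(z ^ 2 / 2) * s + z * α s) (-z * s + α s) z :=
      ((((hasDerivAt_pow 2 z).div_const 2).neg.mul_const ((s : ℝ) : ℂ)).add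
        ((hasDerivAt_id z).mul_const (α s : ℂ))).congr_deriv (by simp)
    exact hquad.cexp.deriv
  intro z₀
  refine (differentiableOn_integral_of_norm_le (U := Metric.ball 0 (‖z₀‖ + 1)) Metric.isOpen_ball
    (fun z _ => ?_) (fun z _ => ?_) (fun s => by fun_prop)
    (ae_of_all _ fun (s : Icc 0 S) z hz => norm_cexp_sq_mul_add_mul_le s.2 (hα s s.2) hA
      (mem_ball_zero_iff.1 hz).le)).differentiableAt
    (Metric.isOpen_ball.mem_nhds (by simp))
  · exact Continuous.aestronglyMeasurable (by fun_prop)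
  · simp only [hderiv]
    exact Continuous.aestronglyMeasurable (by fun_prop)

lemma integral_cexp_ofReal (θ : ℝ) :
    ∫ s : Icc 0 S, Complex.exp (-((θ : ℂ) ^ 2 / 2) * s + θ * α s) ∂lam
      = ((∫ s, driftKernel α θ s ∂lam : ℝ) : ℂ) := by
  rw [← integral_complex_ofReal]
  unfold driftKernel
  push_cast
  rfl

lemma integral_driftKernel_le [IsFiniteMeasure lam] (h : ContinuousOn α (Ici 0))
    (hα : ∀ s ∈ Icc 0 S, |α s| ≤ A * s) (θ : ℝ) :
    ∫ s, driftKernel α θ s ∂lam ≤ lam.real univ * Real.exp (A ^ 2 * S / 2) := by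
  rw [← smul_eq_mul, ← integral_const]
  exact integral_mono ((isBoundedKernel_driftKernel h hα).integrable_right lam θ)
    (integrable_const _) fun s => driftKernel_le_exp s.2 (hα s s.2) θ

/-- Both sides extend to entire functions of `θ`, and only the right one is unbounded as
`θ → -∞`. -/
lemma eventually_integral_driftKernel_ne_exp [IsFiniteMeasure lam]
    (h : ContinuousOn α (Ici 0)) (hA : 0 ≤ A) (hα : ∀ s ∈ Icc 0 S, |α s| ≤ A * s) (hc : 0 < c)
    (θ₀ : ℝ) :
    ∀ᶠ θ in 𝓝[≠] θ₀, ∫ s, driftKernel α θ s ∂lam ≠ Real.exp (-(c * θ)) := by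
  let F : ℂ → ℂ := fun z =>
    ∫ s : Icc 0 S, Complex.exp (-(z ^ 2 / 2) * s + z * α s) ∂lam - Complex.exp (-(c * z))
  have hF : Differentiable ℂ F :=
    (differentiable_integral_cexp h hA hα).sub (by fun_prop)
  have hFan : AnalyticOnNhd ℂ F univ := fun z _ => hF.analyticAt z
  have hFreal (θ : ℝ) :
      F θ = ((∫ s, driftKernel α θ s ∂lam - Real.exp (-(c * θ)) : ℝ) : ℂ) := by
    simp only [F, integral_cexp_ofReal]
    push_cast
    rfl
  have hnonzero : ¬ ∀ᶠ z in 𝓝 (θ₀ : ℂ), F z = 0 := fun hzero => by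
    have hF0 := hFan.eq_of_eventuallyEq (g := fun _ => 0) (fun z _ => analyticAt_const) hzero
    set M := lam.real univ * Real.exp (A ^ 2 * S / 2)
    have heq := (hFreal (-(M / c))).symm.trans (congrFun hF0 _)
    rw [Complex.ofReal_eq_zero, sub_eq_zero, mul_neg, neg_neg, mul_div_cancel₀ _ hc.ne'] at heq
    linarith [Real.add_one_le_exp M, integral_driftKernel_le (lam := lam) h hα (-(M / c))]
  have hne := (hFan θ₀ trivial).eventually_eq_zero_or_eventually_ne_zero.resolve_left hnonzero
  have hmap : Tendsto Complex.ofReal (𝓝[≠] θ₀) (𝓝[≠] (θ₀ : ℂ)) :=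
    Complex.continuous_ofReal.continuousAt.continuousWithinAt.tendsto_nhdsWithin
      fun θ hθ => Complex.ofReal_injective.ne hθ
  filter_upwards [hmap.eventually hne] with θ hθ heq
  exact hθ (by rw [hFreal, heq, sub_self, Complex.ofReal_zero])

end

lemma eventually_eq_zero_of_norm_le_exp_neg_div {E : Type*} [NormedAddCommGroup E]
    [NormedSpace ℝ E] {R : ℝ → E} (hR : AnalyticAt ℝ R 0) {C κ : ℝ} (hκ : 0 < κ)
    (hle : ∀ᶠ t in 𝓝[>] 0, ‖R t‖ ≤ C * Real.exp (-(κ / t))) : ∀ᶠ t in 𝓝 0, R t = 0 := by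
  by_contra hne
  obtain ⟨n, g, hg, hg0, hgR⟩ := hR.exists_eventuallyEq_pow_smul_nonzero_iff.2 hne
  have hinv : Tendsto (fun t : ℝ => κ / t) (𝓝[>] 0) atTop := by
    simpa only [div_eq_mul_inv] using tendsto_inv_nhdsGT_zero.const_mul_atTop hκ
  have hlim := ((Real.tendsto_pow_mul_exp_neg_atTop_nhds_zero n).comp hinv).const_mul (C / κ ^ n)
  rw [mul_zero] at hlim
  have hg_lim : Tendsto g (𝓝[>] 0) (𝓝 0) := by
    refine squeeze_zero_norm' ?_ hlim
    filter_upwards [mem_nhdsWithin_of_mem_nhds hgR, hle, self_mem_nhdsWithin] with t hgt ht ht0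
    have ht0 : 0 < t := ht0
    rw [hgt, sub_zero, norm_smul, norm_pow, Real.norm_of_nonneg ht0.le] at ht
    rw [← mul_le_mul_iff_right₀ (pow_pos ht0 n)]
    refine ht.trans_eq ?_
    simp only [Function.comp, div_pow]
    field_simp
  exact hg0 (tendsto_nhds_unique (hg.continuousAt.tendsto.mono_left nhdsWithin_le_nhds) hg_lim)

section

variable {ν : Measure ℝ} {α γ : ℝ → ℝ} {θ₀ δ : ℝ}

lemma driftKernel_inv {u : ℝ} (hαu : α u⁻¹ = θ₀ / 2 * u⁻¹ + γ u) (θ : ℝ) :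
    driftKernel α θ u⁻¹ = Real.exp (θ * γ u - θ * (θ - θ₀) / 2 * u⁻¹) := by
  rw [driftKernel, hαu]
  ring_nf

lemma driftKernel_inv_le {u θ : ℝ} (hαu : α u⁻¹ = θ₀ / 2 * u⁻¹ + γ u) (hu : 0 < u)
    (hθ₀ : 0 < θ₀) (hδ : 0 < δ) (hγ : 4 * γ u * u ≤ δ) (hθ : θ₀ + δ ≤ θ) :
    driftKernel α θ u⁻¹ ≤ Real.exp (-(θ₀ * δ / 4 / u)) := by
  rw [driftKernel_inv hαu, Real.exp_le_exp, ← sub_nonneg]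
  have hnum : 0 ≤ θ * (δ - 4 * γ u * u) + (2 * θ * (θ - θ₀ - δ) + δ * (θ - θ₀)) :=
    add_nonneg (mul_nonneg (by linarith) (by linarith))
      (add_nonneg (mul_nonneg (by linarith) (by linarith)) (mul_nonneg hδ.le (by linarith)))
  refine (div_nonneg hnum (by linarith : 0 ≤ 4 * u)).trans_eq ?_
  field_simp
  ring

lemma setIntegral_Ici_eq_integral_sub {f : ℝ → ℝ} (hf : Integrable f ν) (hδ : 0 < δ)
    (hν : ∀ᵐ θ ∂ν, θ = θ₀ ∨ θ₀ + δ ≤ θ) :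
    ∫ θ in Ici (θ₀ + δ), f θ ∂ν = ∫ θ, f θ ∂ν - ν.real {θ₀} * f θ₀ := by
  have hdisj : Disjoint {θ₀} (Ici (θ₀ + δ)) := by simp [hδ]
  have hrestrict : ν.restrict ({θ₀} ∪ Ici (θ₀ + δ)) = ν := Measure.restrict_eq_self_of_ae_mem hν
  have hsplit := setIntegral_union hdisj measurableSet_Ici hf.integrableOn hf.integrableOn
  rw [hrestrict, integral_singleton, smul_eq_mul] at hsplit
  linarith

/-- If the measure has a gap just above `θ₀`, then `1` minus the contribution of `θ₀` is analytic
in `u = 1 / s` and equals the contribution of `Ici (θ₀ + δ)`, which is flat at `u = 0`. -/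
lemma measure_Ici_eq_zero_of_integral_driftKernel_eq_one [IsFiniteMeasure ν] (hθ₀ : 0 < θ₀)
    (hδ : 0 < δ) (hν : ∀ᵐ θ ∂ν, θ = θ₀ ∨ θ₀ + δ ≤ θ) (hγ : AnalyticAt ℝ γ 0)
    (hαγ : ∀ s, 0 < s → α s = θ₀ / 2 * s + γ s⁻¹)
    (hone : ∀ s, 0 < s → ∫ θ, driftKernel α θ s ∂ν = 1) : ν (Ici (θ₀ + δ)) = 0 := by
  have hαu (u : ℝ) (hu : 0 < u) : α u⁻¹ = θ₀ / 2 * u⁻¹ + γ u := by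
    rw [hαγ _ (inv_pos.2 hu), inv_inv]
  have hint (u : ℝ) (hu : 0 < u) : Integrable (fun θ => driftKernel α θ u⁻¹) ν :=
    .of_integral_ne_zero (by simp [hone _ (inv_pos.2 hu)])
  have htail (u : ℝ) (hu : 0 < u) : ∫ θ in Ici (θ₀ + δ), driftKernel α θ u⁻¹ ∂ν
      = 1 - ν.real {θ₀} * Real.exp (θ₀ * γ u) := by
    rw [setIntegral_Ici_eq_integral_sub (hint u hu) hδ hν, hone _ (inv_pos.2 hu),
      driftKernel_inv (hαu u hu)]
    simp
  have hsmall : ∀ᶠ u in 𝓝[>] (0 : ℝ), 4 * γ u * u ≤ δ := by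
    have hcont : ContinuousAt (fun u => 4 * γ u * u) 0 :=
      (continuousAt_const.mul hγ.continuousAt).mul continuousAt_id
    exact (hcont.eventually_le_const (by simpa using hδ)).filter_mono nhdsWithin_le_nhds
  have hflat := eventually_eq_zero_of_norm_le_exp_neg_div
    (R := fun u => 1 - ν.real {θ₀} * Real.exp (θ₀ * γ u)) (C := ν.real (Ici (θ₀ + δ)))
    (κ := θ₀ * δ / 4) (analyticAt_const.sub (analyticAt_const.mul (analyticAt_const.mul hγ).rexp))
    (by positivity) (by
      filter_upwards [hsmall, self_mem_nhdsWithin] with u hu hu0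
      have hu0 : 0 < u := hu0
      rw [← htail u hu0, Real.norm_of_nonneg (integral_nonneg fun θ => (driftKernel_pos α θ _).le),
        ← smul_eq_mul, ← setIntegral_const]
      exact setIntegral_mono_on (hint u hu0).integrableOn (integrable_const _) measurableSet_Ici
        fun θ hθ => driftKernel_inv_le (hαu u hu0) hu0 hθ₀ hδ hu hθ)
  obtain ⟨u, hzero, hu⟩ :=
    ((hflat.filter_mono nhdsWithin_le_nhds).and (self_mem_nhdsWithin (s := Ioi (0 : ℝ)))).exists
  rw [← htail u hu, setIntegral_eq_zero_iff_of_nonneg_ae (ae_of_all _ fun θ =>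
      (driftKernel_pos α θ _).le) (hint u hu).integrableOn] at hzero
  rw [← Measure.restrict_eq_zero, ← ae_eq_bot, ← eventually_false_iff_eq_bot]
  exact hzero.mono fun θ hθ => (driftKernel_pos α θ _).ne' hθ

end

lemma eventually_exp_lt_integral_of_not_frequently {α : ℝ → ℝ} {S c θ₀ : ℝ}
    (h : AnalyticOnNhd ℝ α (Ici 0)) (h0 : α 0 = 0) (hc : 0 < c) {lam : Measure (Icc 0 S)}
    [IsFiniteMeasure lam]
    (hcover : ∀ θ, θ₀ ≤ θ → Real.exp (-(c * θ)) ≤ ∫ s, driftKernel α θ s ∂lam) {F : ℝ → ℝ}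
    (hF : ¬ ∃ᶠ s in 𝓝[>] (0 : ℝ), F s = 1) (hslack : ∀ᵐ s : Icc 0 S ∂lam, F s = 1) :
    ∀ᶠ θ : ℝ in atTop, Real.exp (-(c * θ)) < ∫ s, driftKernel α θ s ∂lam := by
  obtain ⟨A, hA, hα⟩ := exists_abs_le_mul_of_analyticOnNhd h h0 S
  obtain ⟨η, hη, hsub⟩ := mem_nhdsGT_iff_exists_Ioo_subset.1 (not_frequently.1 hF)
  have hsupp : ∀ᵐ s : Icc 0 S ∂lam, (s : ℝ) = 0 ∨ η ≤ s := hslack.mono fun s hs => by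
    by_contra! hmid
    exact hsub ⟨s.2.1.lt_of_ne' hmid.1, hmid.2⟩ hs
  exact eventually_exp_lt_integral_driftKernel h.continuousOn h0 hα hc
    (measureReal_zero_pos_of_exp_le_integral h.continuousOn hA hα hη hsupp
      ((eventually_ge_atTop θ₀).mono hcover))

/-- Complementary slackness forces the support of a packing to be bounded. Either the potential of
`ν` equals `1` near `s = 0` only at `s = 0`, so that `lam` has an atom there and its potential
dominates `exp (-c θ)` strictly for large `θ`; or it is identically `1`, and then `ν` is
concentrated at `θ₀`. -/
theorem exists_ae_le_of_complementary_slackness {α γ : ℝ → ℝ} {S c θ₀ : ℝ}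
    (h : AnalyticOnNhd ℝ α (Ici 0)) (h0 : α 0 = 0) (hγ : AnalyticAt ℝ γ 0)
    (hαγ : ∀ s, 0 < s → α s = θ₀ / 2 * s + γ s⁻¹) (hθ₀ : 0 < θ₀) (hc : 0 < c) {ν : Measure ℝ}
    [IsFiniteMeasure ν] (hν : ∀ᵐ θ ∂ν, θ₀ ≤ θ) {lam : Measure (Icc 0 S)} [IsFiniteMeasure lam]
    (hcover : ∀ θ, θ₀ ≤ θ → Real.exp (-(c * θ)) ≤ ∫ s, driftKernel α θ s ∂lam)
    (hslack : ∀ᵐ θ ∂ν, ∫ s, driftKernel α θ s ∂lam = Real.exp (-(c * θ)))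
    (hslack' : ∀ᵐ s : Icc 0 S ∂lam, ∫ θ, driftKernel α θ s ∂ν = 1) :
    ∃ T, ∀ᵐ θ ∂ν, θ ≤ T := by
  by_cases hfreq : ∃ᶠ s in 𝓝[>] (0 : ℝ), ∫ θ, driftKernel α θ s ∂ν = 1
  · obtain ⟨A, hA, hα⟩ := exists_abs_le_mul_of_analyticOnNhd h h0 S
    have hisolated : ∀ᶠ θ in 𝓝[>] θ₀, ∫ s, driftKernel α θ s ∂lam ≠ Real.exp (-(c * θ)) :=
      (eventually_integral_driftKernel_ne_exp h.continuousOn hA hα hc θ₀).filter_mono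
        (nhdsWithin_mono _ fun θ hθ => ne_of_gt hθ)
    obtain ⟨θ₁, hθ₁, hgap⟩ := mem_nhdsGT_iff_exists_Ioo_subset.1 hisolated
    have hνgap : ∀ᵐ θ ∂ν, θ = θ₀ ∨ θ₀ + (θ₁ - θ₀) ≤ θ := by
      filter_upwards [hν, hslack] with θ hθ heq
      by_contra! hmid
      exact hgap ⟨hθ.lt_of_ne' hmid.1, by linarith⟩ heq
    have hone (s : ℝ) (hs : 0 < s) : ∫ θ, driftKernel α θ s ∂ν = 1 :=
      integral_driftKernel_eq_one (hν.mono fun θ hθ => hθ₀.le.trans hθ) h h0 hfreq hs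
    have hzero := measure_Ici_eq_zero_of_integral_driftKernel_eq_one hθ₀ (sub_pos.2 hθ₁) hνgap hγ
      hαγ hone
    exact ⟨_, (measure_eq_zero_iff_ae_notMem.1 hzero).mono fun θ hθ => (not_le.1 hθ).le⟩
  · obtain ⟨T, hT⟩ := eventually_atTop.1
      (eventually_exp_lt_integral_of_not_frequently h h0 hc hcover hfreq hslack')
    exact ⟨T, hslack.mono fun θ heq => le_of_not_ge fun hθ => (hT θ hθ).ne' heq⟩

lemma tendsto_exp_neg_mul_cocompact_Ici {c : ℝ} (hc : 0 < c) (θ₀ : ℝ) :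
    Tendsto (fun θ : Ici θ₀ => Real.exp (-(c * θ))) (cocompact (Ici θ₀)) (𝓝 0) := by
  have : CompactIccSpace (Ici θ₀) := ⟨fun {x y} => by
    rw [isClosed_Ici.isClosedEmbedding_subtypeVal.isInducing.isCompact_iff, image_subtype_val_Icc]
    exact isCompact_Icc⟩
  exact Real.tendsto_exp_neg_atTop_nhds_zero.comp
    ((tendsto_comp_val_Ici_atTop.2 (tendsto_id.const_mul_atTop hc)).mono_left cocompact_le_atTop)

theorem exists_isPacking_isCovering_driftKernel {α γ : ℝ → ℝ} {S c θ₀ : ℝ}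
    (h : AnalyticOnNhd ℝ α (Ici 0)) (h0 : α 0 = 0) (hγ : AnalyticAt ℝ γ 0)
    (hαγ : ∀ s, 0 < s → α s = θ₀ / 2 * s + γ s⁻¹) (hθ₀ : 0 < θ₀) (hc : 0 < c) (hS : 0 ≤ S) :
    ∃ (ν : Measure ℝ) (lam : Measure (Icc 0 S)),
      IsPacking (fun θ (s : Icc 0 S) => driftKernel α θ s) ν ∧
      IsCovering (fun (θ : Ici θ₀) (s : Icc 0 S) => driftKernel α θ s)
        (fun θ => Real.exp (-(c * θ))) lam ∧
      lam.real univ = ∫ θ, Real.exp (-(c * θ)) ∂ν ∧ (∀ᵐ θ ∂ν, θ₀ ≤ θ) ∧ ∃ T, ∀ᵐ θ ∂ν, θ ≤ T := by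
  obtain ⟨A, -, hα⟩ := exists_abs_le_mul_of_analyticOnNhd h h0 S
  have hk := (isBoundedKernel_driftKernel h.continuousOn hα).restrict_left (Ici θ₀)
  have hg : Continuous fun θ : Ici θ₀ => Real.exp (-(c * θ)) := by fun_prop
  obtain ⟨ν, lam, hν, hlam, heq⟩ := hk.exists_isPacking_isCovering hg (fun θ => Real.exp_pos _)
    (tendsto_exp_neg_mul_cocompact_Ici hc θ₀) one_pos (xs := ⟨0, le_rfl, hS⟩)
    fun θ => (driftKernel_zero h0 θ).ge
  have := hν.1
  have := hlam.1
  have hgint : Integrable (fun θ : Ici θ₀ => Real.exp (-(c * θ))) ν :=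
    .of_bound hg.aestronglyMeasurable 1 (ae_of_all _ fun θ => by
      rw [Real.norm_of_nonneg (Real.exp_pos _).le, Real.exp_le_one_iff, neg_nonpos]
      exact mul_nonneg hc.le (hθ₀.le.trans θ.2))
  obtain ⟨hslack, hslack'⟩ := hk.ae_eq_of_integral_eq hν hlam hgint heq
  have hemb : MeasurableEmbedding ((↑) : Ici θ₀ → ℝ) := .subtype_coe measurableSet_Ici
  have hpack : IsPacking (fun θ (s : Icc 0 S) => driftKernel α θ s) (ν.map (↑)) :=
    ⟨inferInstance, fun s => by rw [hemb.integral_map]; exact hν.2 s⟩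
  have hge : ∀ᵐ θ ∂ν.map ((↑) : Ici θ₀ → ℝ), θ₀ ≤ θ :=
    hemb.ae_map_iff.2 (ae_of_all _ fun θ => θ.2)
  refine ⟨ν.map (↑), lam, hpack, hlam, by rw [hemb.integral_map, heq], hge, ?_⟩
  exact exists_ae_le_of_complementary_slackness h h0 hγ hαγ hθ₀ hc hge
    (fun θ hθ => hlam.2 ⟨θ, hθ⟩) (hemb.ae_map_iff.2 hslack)
    (hslack'.mono fun s hs => by rw [hemb.integral_map, hs])

/-! ### Time inversion -/

/-- The time `t` with `1 / t = 1 / t0 + s`. The change of variable `s = 1 / t - 1 / t0` makes the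
exponent of `rTheta θ t x` affine in the time variable. -/
noncomputable def invTime (t0 s : ℝ) : ℝ := (t0⁻¹ + s)⁻¹

/-- The drift of the boundary `b` in inverted time: `b t / t` at `t = invTime t0 s`, with its value
at `s = 0` subtracted. -/
noncomputable def invDrift (b : ℝ → ℝ) (t0 s : ℝ) : ℝ :=
  b (invTime t0 s) * (t0⁻¹ + s) - b t0 * t0⁻¹

section TimeInversion

variable {b : ℝ → ℝ} {t0 s : ℝ}

lemma invTime_pos (ht0 : 0 < t0) (hs : 0 ≤ s) : 0 < invTime t0 s :=
  inv_pos.2 (add_pos_of_pos_of_nonneg (inv_pos.2 ht0) hs)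

lemma invTime_inv_sub_inv (t0 t : ℝ) : invTime t0 (t⁻¹ - t0⁻¹) = t := by
  simp [invTime]

lemma inv_sub_inv_mem_Icc {ε t : ℝ} (hε : 0 < ε) (ht : t ∈ Icc ε t0) :
    t⁻¹ - t0⁻¹ ∈ Icc 0 (ε⁻¹ - t0⁻¹) :=
  have ht' : 0 < t := hε.trans_le ht.1
  ⟨sub_nonneg.2 (inv_anti₀ ht' ht.2), sub_le_sub_right (inv_anti₀ hε ht.1) _⟩

lemma invTime_mem_Icc {ε : ℝ} (ht0 : 0 < t0) (hε : 0 < ε) (hs : s ∈ Icc 0 (ε⁻¹ - t0⁻¹)) :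
    invTime t0 s ∈ Icc ε t0 :=
  ⟨(le_inv_comm₀ hε (inv_pos.1 (invTime_pos ht0 hs.1))).2 (by linarith [hs.2]),
    inv_le_of_inv_le₀ ht0 (by linarith [hs.1])⟩

lemma continuousOn_invTime (ht0 : 0 < t0) : ContinuousOn (invTime t0) (Ici 0) :=
  ContinuousOn.inv₀ (by fun_prop) fun _ hs => (inv_pos.1 (invTime_pos ht0 hs)).ne'

lemma injective_invTime (t0 : ℝ) : Function.Injective (invTime t0) :=
  inv_injective.comp (add_right_injective _)

lemma analyticOnNhd_invDrift (hb : AnalyticOnNhd ℝ b (Ici 0)) (ht0 : 0 < t0) :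
    AnalyticOnNhd ℝ (invDrift b t0) (Ici 0) := fun s hs => by
  have hadd : AnalyticAt ℝ (fun s => t0⁻¹ + s) s := analyticAt_const.add analyticAt_id
  have hinv : AnalyticAt ℝ (invTime t0) s := hadd.inv (inv_pos.1 (invTime_pos ht0 hs)).ne'
  exact (((hb _ (invTime_pos ht0 hs).le).comp hinv).mul hadd).sub analyticAt_const

lemma invDrift_zero (b : ℝ → ℝ) (t0 : ℝ) : invDrift b t0 0 = 0 := by
  simp [invDrift, invTime]

lemma exists_analyticAt_invDrift_eq (hb : AnalyticAt ℝ b 0) (ht0 : 0 < t0) :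
    ∃ γ : ℝ → ℝ, AnalyticAt ℝ γ 0 ∧ ∀ s, 0 < s → invDrift b t0 s = b 0 * s + γ s⁻¹ := by
  obtain ⟨p, hp⟩ := hb
  have hslope : AnalyticAt ℝ (dslope b 0) 0 := hp.has_fpower_series_dslope_fslope.analyticAt
  have hdiv : AnalyticAt ℝ (fun u : ℝ => u / (t0⁻¹ * u + 1)) 0 :=
    analyticAt_id.div ((analyticAt_const.mul analyticAt_id).add analyticAt_const) (by simp)
  refine ⟨fun u => dslope b 0 (u / (t0⁻¹ * u + 1)) + (b 0 - b t0) * t0⁻¹,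
    (hslope.comp_of_eq hdiv (by simp)).add analyticAt_const, fun s hs => ?_⟩
  have htime : s⁻¹ / (t0⁻¹ * s⁻¹ + 1) = invTime t0 s := by
    unfold invTime
    field_simp
  have hpos := invTime_pos ht0 hs.le
  simp only [htime, dslope_of_ne b hpos.ne', slope_def_field, sub_zero, invDrift]
  have hinv : b (invTime t0 s) * (t0⁻¹ + s) = b (invTime t0 s) / invTime t0 s := by
    simp [invTime]
  have hinv0 : b 0 / invTime t0 s = b 0 * (t0⁻¹ + s) := by simp [invTime]
  rw [hinv, sub_div, hinv0]
  ring

lemma rTheta_pos (θ t x : ℝ) : 0 < rTheta θ t x := Real.exp_pos _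

lemma rTheta_eq_mul_driftKernel (b : ℝ → ℝ) (t0 θ t : ℝ) :
    rTheta θ t (b t) = rTheta θ t0 (b t0) * driftKernel (invDrift b t0) θ (t⁻¹ - t0⁻¹) := by
  rw [rTheta, rTheta, driftKernel, invDrift, invTime_inv_sub_inv, ← Real.exp_add]
  congr 1
  ring

lemma rTheta_eq_mul_exp (θ x y : ℝ) :
    rTheta θ t0 x = rTheta θ t0 y * Real.exp (-((y - x) / t0 * θ)) := by
  rw [rTheta, rTheta, ← Real.exp_add]
  congr 1
  ring

end TimeInversion

/-! ### Weak duality and transfer to the original problem -/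

lemma lintegral_le_measure_univ_of_le_lintegral {Θ X : Type*} [MeasurableSpace Θ]
    [MeasurableSpace X] {μ : Measure Θ} {lam : Measure X} [SFinite μ] [SFinite lam]
    {k : Θ → X → ℝ≥0∞} (hk : AEMeasurable (Function.uncurry k) (μ.prod lam)) {g : Θ → ℝ≥0∞}
    (hg : ∀ᵐ θ ∂μ, g θ ≤ ∫⁻ x, k θ x ∂lam) (hle : ∀ᵐ x ∂lam, ∫⁻ θ, k θ x ∂μ ≤ 1) :
    ∫⁻ θ, g θ ∂μ ≤ lam univ :=
  calc ∫⁻ θ, g θ ∂μ ≤ ∫⁻ θ, ∫⁻ x, k θ x ∂lam ∂μ := lintegral_mono_ae hg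
    _ = ∫⁻ x, ∫⁻ θ, k θ x ∂μ ∂lam := lintegral_lintegral_swap hk
    _ ≤ ∫⁻ _, 1 ∂lam := lintegral_mono_ae hle
    _ = lam univ := lintegral_one

section Transfer

variable {b : ℝ → ℝ} {t0 x0 ε : ℝ} {μ lam : Measure ℝ}

lemma aemeasurable_uncurry_rTheta (hε : 0 < ε) (hb : ContinuousOn b (Icc ε t0)) [SFinite μ]
    [SFinite lam] (hlam : ∀ᵐ t ∂lam, t ∈ Icc ε t0) :
    AEMeasurable (Function.uncurry fun θ t => ENNReal.ofReal (rTheta θ t (b t)))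
      (μ.prod lam) := by
  have hsnd : MapsTo Prod.snd (univ ×ˢ Icc ε t0 : Set (ℝ × ℝ)) (Icc ε t0) := fun _ hp => hp.2
  have hcont : ContinuousOn (fun p : ℝ × ℝ => rTheta p.1 p.2 (b p.2)) (univ ×ˢ Icc ε t0) := by
    have hne : ∀ p ∈ (univ ×ˢ Icc ε t0 : Set (ℝ × ℝ)), p.2 ≠ 0 := fun p hp =>
      (hε.trans_le hp.2.1).ne'
    have hbsnd := hb.comp continuousOn_snd hsnd
    exact Real.continuous_exp.comp_continuousOn (.add
      (.div (by fun_prop) (by fun_prop) fun p hp => mul_ne_zero two_ne_zero (hne p hp))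
      (.div (continuousOn_fst.mul hbsnd) continuousOn_snd hne))
  have hrestrict : (μ.prod lam).restrict (univ ×ˢ Icc ε t0) = μ.prod lam := by
    rw [← Measure.prod_restrict, Measure.restrict_univ, Measure.restrict_eq_self_of_ae_mem hlam]
  rw [← hrestrict]
  exact (hcont.aemeasurable (MeasurableSet.univ.prod measurableSet_Icc)).ennreal_ofReal

lemma lintegral_le_measure_of_adm (hε : 0 < ε) (hb : ContinuousOn b (Icc ε t0))
    (hμ : D1epsAdm b t0 ε μ) (hlam : P1epsAdm b t0 x0 ε lam) :
    ∫⁻ θ, ENNReal.ofReal (rTheta θ t0 x0) ∂μ ≤ lam (Icc ε t0) := by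
  obtain ⟨hμfin, hμsupp, hμle⟩ := hμ
  obtain ⟨hlamfin, hlamsupp, hlamge⟩ := hlam
  have hlamsupp' : ∀ᵐ t ∂lam, t ∈ Icc ε t0 := hlamsupp
  have hμsupp' : ∀ᵐ θ ∂μ, θ ∈ Ici (2 * b 0) := hμsupp
  have hweak := lintegral_le_measure_univ_of_le_lintegral
    (aemeasurable_uncurry_rTheta (μ := μ) hε hb hlamsupp') (hμsupp'.mono hlamge)
    (hlamsupp'.mono hμle)
  rwa [← Measure.restrict_apply_univ, Measure.restrict_eq_self_of_ae_mem hlamsupp']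

lemma continuous_rTheta (t x : ℝ) : Continuous fun θ => rTheta θ t x :=
  Real.continuous_exp.comp (by fun_prop)

lemma lintegral_rTheta_mul_withDensity_inv (ν : Measure ℝ) (t x : ℝ) {f : ℝ → ℝ}
    (hf : Measurable f) :
    ∫⁻ θ, ENNReal.ofReal (rTheta θ t x * f θ)
        ∂(ν.withDensity fun θ => ENNReal.ofReal (rTheta θ t x)⁻¹) =
      ∫⁻ θ, ENNReal.ofReal (f θ) ∂ν := by
  have hr : Measurable fun θ => rTheta θ t x := (continuous_rTheta t x).measurable
  rw [lintegral_ofReal_withDensity ν (h := fun θ => (rTheta θ t x)⁻¹)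
    (f := fun θ => rTheta θ t x * f θ) hr.inv
    (fun θ => (inv_pos.2 (rTheta_pos θ t x)).le) (hr.mul hf)]
  simp only [inv_mul_cancel_left₀ (rTheta_pos _ t x).ne']

variable {ν : Measure ℝ} {T : ℝ}

lemma d1epsAdm_withDensity_inv (hb : AnalyticOnNhd ℝ b (Ici 0)) (ht0 : 0 < t0) (hε : 0 < ε)
    (hν : IsPacking (fun θ (s : Icc 0 (ε⁻¹ - t0⁻¹)) => driftKernel (invDrift b t0) θ s) ν)
    (hge : ∀ᵐ θ ∂ν, 2 * b 0 ≤ θ) (hle : ∀ᵐ θ ∂ν, θ ≤ T) :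
    D1epsAdm b t0 ε (ν.withDensity fun θ => ENNReal.ofReal (rTheta θ t0 (b t0))⁻¹) := by
  have := hν.1
  obtain ⟨A, -, hA⟩ := exists_abs_le_mul_of_analyticOnNhd (analyticOnNhd_invDrift hb ht0)
    (invDrift_zero b t0) (ε⁻¹ - t0⁻¹)
  have hk := isBoundedKernel_driftKernel (analyticOnNhd_invDrift hb ht0).continuousOn hA
  refine ⟨?_, withDensity_absolutelyContinuous _ _ hge, fun t ht => ?_⟩
  · have hint : IntegrableOn (fun θ => (rTheta θ t0 (b t0))⁻¹) (Icc (2 * b 0) T) ν :=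
      ((continuous_rTheta t0 (b t0)).inv₀ fun θ => (rTheta_pos θ _ _).ne').integrableOn_Icc
    rw [IntegrableOn, Measure.restrict_eq_self_of_ae_mem (s := Icc (2 * b 0) T) (hge.and hle)]
      at hint
    exact isFiniteMeasure_withDensity_ofReal hint.2
  · have hs := inv_sub_inv_mem_Icc hε ht
    simp only [rMu, rTheta_eq_mul_driftKernel b t0 _ t]
    rw [lintegral_rTheta_mul_withDensity_inv ν t0 _ (hk.continuous_left ⟨_, hs⟩).measurable,
      ← ofReal_integral_eq_lintegral_ofReal (hk.integrable_left ν ⟨_, hs⟩)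
        (ae_of_all _ fun θ => (driftKernel_pos _ _ _).le)]
    exact ENNReal.ofReal_le_one.2 (hν.2 ⟨_, hs⟩)

lemma measurableEmbedding_invTime (ht0 : 0 < t0) (S : ℝ) :
    MeasurableEmbedding fun s : Icc 0 S => invTime t0 s :=
  (Continuous.isClosedEmbedding
    ((continuousOn_invTime ht0).comp_continuous continuous_subtype_val fun s => s.2.1)
    ((injective_invTime t0).comp Subtype.val_injective)).measurableEmbedding

lemma map_invTime_Icc (ht0 : 0 < t0) (hε : 0 < ε) (lam : Measure (Icc 0 (ε⁻¹ - t0⁻¹))) :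
    lam.map (fun s : Icc 0 (ε⁻¹ - t0⁻¹) => invTime t0 s) (Icc ε t0) = lam univ := by
  rw [(measurableEmbedding_invTime ht0 _).map_apply,
    eq_univ_of_forall fun s => mem_preimage.2 (invTime_mem_Icc ht0 hε s.2)]

lemma p1epsAdm_map_invTime (hb : AnalyticOnNhd ℝ b (Ici 0)) (ht0 : 0 < t0) (hε : 0 < ε)
    {lam : Measure (Icc 0 (ε⁻¹ - t0⁻¹))}
    (hlam : IsCovering
      (fun (θ : Ici (2 * b 0)) (s : Icc 0 (ε⁻¹ - t0⁻¹)) => driftKernel (invDrift b t0) θ s)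
      (fun θ => Real.exp (-((b t0 - x0) / t0 * θ))) lam) :
    P1epsAdm b t0 x0 ε (lam.map fun s : Icc 0 (ε⁻¹ - t0⁻¹) => invTime t0 s) := by
  have := hlam.1
  have hemb := measurableEmbedding_invTime ht0 (ε⁻¹ - t0⁻¹)
  obtain ⟨A, -, hA⟩ := exists_abs_le_mul_of_analyticOnNhd (analyticOnNhd_invDrift hb ht0)
    (invDrift_zero b t0) (ε⁻¹ - t0⁻¹)
  have hk := isBoundedKernel_driftKernel (analyticOnNhd_invDrift hb ht0).continuousOn hA
  refine ⟨inferInstance, ?_, fun θ hθ => ?_⟩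
  · exact hemb.ae_map_iff (p := (· ∈ Icc ε t0)).2 (ae_of_all _ fun s => invTime_mem_Icc ht0 hε s.2)
  · have hkernel (s : Icc 0 (ε⁻¹ - t0⁻¹)) :
        ENNReal.ofReal (rTheta θ (invTime t0 s) (b (invTime t0 s))) =
          ENNReal.ofReal (rTheta θ t0 (b t0)) *
            ENNReal.ofReal (driftKernel (invDrift b t0) θ s) := by
      rw [rTheta_eq_mul_driftKernel b t0, ENNReal.ofReal_mul (rTheta_pos _ _ _).le, invTime,
        inv_inv, add_sub_cancel_left]
    rw [hemb.lintegral_map, lintegral_congr hkernel, lintegral_const_mul' _ _ ENNReal.ofReal_ne_top,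
      ← ofReal_integral_eq_lintegral_ofReal (hk.integrable_right lam θ)
        (ae_of_all _ fun s => (driftKernel_pos _ _ _).le),
      rTheta_eq_mul_exp θ x0 (b t0), ENNReal.ofReal_mul (rTheta_pos _ _ _).le]
    gcongr
    exact hlam.2 ⟨θ, hθ⟩

theorem exists_adm_lintegral_eq (hb : AnalyticOnNhd ℝ b (Ici 0)) (hb0 : 0 < b 0) (ht0 : 0 < t0)
    (hx0 : x0 < b t0) (hε : 0 < ε) (hεt : ε ≤ t0) :
    ∃ μ lam : Measure ℝ, D1epsAdm b t0 ε μ ∧ P1epsAdm b t0 x0 ε lam ∧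
      ∫⁻ θ, ENNReal.ofReal (rTheta θ t0 x0) ∂μ = lam (Icc ε t0) := by
  set c := (b t0 - x0) / t0
  have hc : 0 < c := div_pos (sub_pos.2 hx0) ht0
  obtain ⟨γ, hγ, hαγ⟩ := exists_analyticAt_invDrift_eq (hb 0 self_mem_Ici) ht0
  obtain ⟨ν, lam, hν, hlam, heq, hge, T, hle⟩ := exists_isPacking_isCovering_driftKernel
    (analyticOnNhd_invDrift hb ht0) (invDrift_zero b t0) hγ (θ₀ := 2 * b 0)
    (fun s hs => by rw [hαγ s hs, mul_div_cancel_left₀ _ two_ne_zero]) (by positivity) hc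
    (sub_nonneg.2 (inv_anti₀ hε hεt))
  have := hν.1
  have := hlam.1
  have hint : Integrable (fun θ => Real.exp (-(c * θ))) ν :=
    .of_bound (by fun_prop) 1 (hge.mono fun θ hθ => by
      rw [Real.norm_of_nonneg (Real.exp_pos _).le, Real.exp_le_one_iff, neg_nonpos]
      exact mul_nonneg hc.le ((by positivity : 0 ≤ 2 * b 0).trans hθ))
  refine ⟨_, _, d1epsAdm_withDensity_inv hb ht0 hε hν hge hle,
    p1epsAdm_map_invTime hb ht0 hε hlam, ?_⟩
  simp only [rTheta_eq_mul_exp (t0 := t0) _ x0 (b t0)]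
  rw [lintegral_rTheta_mul_withDensity_inv ν t0 _ (by fun_prop),
    ← ofReal_integral_eq_lintegral_ofReal hint (ae_of_all _ fun θ => (Real.exp_pos _).le), ← heq,
    map_invTime_Icc ht0 hε, ofReal_measureReal]

end Transfer

theorem stmt_6_general (b : ℝ → ℝ) (hba : AnalyticOnNhd ℝ b (Set.Ici 0)) (hb0 : 0 < b 0)
    (t0 x0 : ℝ) (ht0 : 0 < t0) (hx0 : x0 < b t0) :
    ∀ ε ∈ Set.Ioo 0 t0,
      (∃ μopt : Measure ℝ, D1epsAdm b t0 ε μopt ∧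
        ∀ μ : Measure ℝ, D1epsAdm b t0 ε μ →
          (∫⁻ θ, ENNReal.ofReal (rTheta θ t0 x0) ∂μ)
            ≤ ∫⁻ θ, ENNReal.ofReal (rTheta θ t0 x0) ∂μopt) ∧
      (∃ lamopt : Measure ℝ, P1epsAdm b t0 x0 ε lamopt ∧
        ∀ lam : Measure ℝ, P1epsAdm b t0 x0 ε lam →
          lamopt (Set.Icc ε t0) ≤ lam (Set.Icc ε t0)) := by
  intro ε ⟨hε, hεt⟩
  obtain ⟨μ, lam, hμ, hlam, heq⟩ := exists_adm_lintegral_eq hba hb0 ht0 hx0 hε hεt.le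
  have hb : ContinuousOn b (Icc ε t0) :=
    hba.continuousOn.mono fun t ht => hε.le.trans ht.1
  exact ⟨⟨μ, hμ, fun μ' hμ' => heq ▸ lintegral_le_measure_of_adm hε hb hμ' hlam⟩,
    ⟨lam, hlam, fun lam' hlam' => heq ▸ lintegral_le_measure_of_adm hε hb hμ hlam'⟩⟩

theorem stmt_6 (b : ℝ → ℝ)
    (hba : AnalyticOnNhd ℝ b (Set.Ici 0)) (hbconc : ConcaveOn ℝ (Set.Ici 0) b)
    (hb0 : 0 < b 0) (hbderiv : ∃ d : ℝ, HasDerivWithinAt b d (Set.Ici 0) 0)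
    (t0 x0 : ℝ) (ht0 : 0 < t0) (hx0 : x0 < b t0) :
    ∀ ε ∈ Set.Ioo 0 t0,
      (∃ μopt : Measure ℝ, D1epsAdm b t0 ε μopt ∧
        ∀ μ : Measure ℝ, D1epsAdm b t0 ε μ →
          (∫⁻ θ, ENNReal.ofReal (rTheta θ t0 x0) ∂μ)
            ≤ ∫⁻ θ, ENNReal.ofReal (rTheta θ t0 x0) ∂μopt) ∧
      (∃ lamopt : Measure ℝ, P1epsAdm b t0 x0 ε lamopt ∧
        ∀ lam : Measure ℝ, P1epsAdm b t0 x0 ε lam →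
          lamopt (Set.Icc ε t0) ≤ lam (Set.Icc ε t0)) :=
  stmt_6_general b hba hb0 t0 x0 ht0 hx0
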